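/- Let T > 0, let ε ∈ (0,1/2), and let {t_m}_{m≥1} ⊂ (0,T) be pairwise distinct with t_m → T1 for some T1 ∈ (0,T). For j = 1,2 let b_j ∈ C¹([0,1]) and let g_j ∈ C¹([0,1]) with g_j(0) = g_j(1) = 0 be not identically zero. Assume supp g_1 ∪ supp g_2 ⊂ [0,ε] and supp(b_1 − b_2) ⊂ [0, 1/2 − ε]. If the boundary measurements satisfy M_1(t_m) = M_2(t_m) for all m ∈ ℕ, then g_1 = g_2 and b_1 = b_2. -/

import Mathlib

open Set

/-- `(μ, ψ)` is a Dirichlet eigenpair of `-d²/dx² + V` on `(0,1)`. -/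
def IsDirichletEigenpair (V : ℝ → ℝ) (μ : ℝ) (ψ : ℝ → ℝ) : Prop :=
  ContDiffOn ℝ 2 ψ (Icc 0 1) ∧ (∃ x ∈ Icc (0:ℝ) 1, ψ x ≠ 0) ∧
  (∀ x ∈ Ioo (0:ℝ) 1,
    -(derivWithin (derivWithin ψ (Icc 0 1)) (Icc 0 1) x) + V x * ψ x = μ * ψ x) ∧
  ψ 0 = 0 ∧ ψ 1 = 0

/-- `(lam, phi)` enumerates the Dirichlet eigenvalues of `-d²/dx² + V` on `(0,1)` in
strictly increasing order, with `L²`-normalized eigenfunctions. -/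
def IsDirichletSystem (V : ℝ → ℝ) (lam : ℕ → ℝ) (phi : ℕ → ℝ → ℝ) : Prop :=
  StrictMono lam ∧ Filter.Tendsto lam Filter.atTop Filter.atTop ∧
  (∀ k, IsDirichletEigenpair V (lam k) (phi k)) ∧
  (∀ k, ∫ x in (0:ℝ)..1, (phi k x)^2 = 1) ∧
  (∀ μ ψ, IsDirichletEigenpair V μ ψ → ∃ k, μ = lam k)

/-- The Schrödinger potential obtained from the convection coefficient `b`. -/
noncomputable def potentialOf (b : ℝ → ℝ) : ℝ → ℝ :=
  fun x => -(derivWithin b (Icc 0 1) x) / 2 + (b x)^2 / 4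

/-- The gauged initial datum `h(x) = e^{-(1/2)∫₁ˣ b} g(x)`. -/
noncomputable def gaugedDatum (b g : ℝ → ℝ) : ℝ → ℝ :=
  fun x => Real.exp (-(1/2) * ∫ s in (1:ℝ)..x, b s) * g x

/-- The lateral boundary measurement `M(t) = ∂ₓu(t,1)` of the convection–diffusion
problem, written via the eigenfunction expansion. -/
noncomputable def boundaryMeasurement (b g : ℝ → ℝ) (lam : ℕ → ℝ) (phi : ℕ → ℝ → ℝ)
    (t : ℝ) : ℝ :=
  ∑' k, (∫ x in (0:ℝ)..1, gaugedDatum b g x * phi k x) * Real.exp (-(lam k) * t)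
    * derivWithin (phi k) (Icc 0 1) 1

/-!
Write `S_j(l, x)` for the solution of `-y'' + V_j y = l y` with `y(0) = 0`, `y'(0) = 1`, where
`V_j` is the potential of `b_j`, and `Φ_j(l) = ∫₀¹ h_j(x) S_j(l, x) dx`. The coefficient of
`exp (-λ t)` in the boundary measurement is the residue of `Φ_j / S_j(·, 1)` at `l = λ`. Dirichlet
series that agree on a set of times with a positive accumulation point have equal coefficients, so
the difference of the two quotients is entire; since `h_j` vanishes near `1`, it tends to zero
along large contours avoiding the eigenvalues, and therefore `Φ₁ S₂(·, 1) = Φ₂ S₁(·, 1)`.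

Where the potentials agree, on `(a, 1)`, both solutions are propagated by the same transfer matrix
of determinant one, whose entries grow faster than `Φ_i S_j(·, a)`. The identity can thus be
pulled back to `x = a` componentwise, and `S₁` and `S₂` have the same logarithmic derivative at
`a`. As in the Borg–Marchenko theorem this determines the potential on `(0, a)`: the function
`C₁ S₂ - C₂ S₁` formed from the fundamental solutions with initial data at `a` is entire in `l`
and decays, so it vanishes; differentiating and using that the Wronskians are one, the squares of
the fundamental solutions agree, hence so do the potentials. Now `Φ₁ = Φ₂` and the completeness of
the functions `S(l, ·)` give `h₁ = h₂`, and the Riccati equation `V = -b' / 2 + b² / 4` with the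
common value `b₁(1) = b₂(1)` gives `b₁ = b₂`.
-/

open Filter Topology MeasureTheory

/-- The boundary of the square with half-side `r` centred at the origin. -/
def squareContour (r : ℝ) : Set ℂ := {z | max |z.re| |z.im| = r}

theorem le_norm_of_mem_squareContour {r : ℝ} {z : ℂ} (hz : z ∈ squareContour r) : r ≤ ‖z‖ :=
  hz.symm.le.trans (max_le (Complex.abs_re_le_norm z) (Complex.abs_im_le_norm z))

theorem mul_I_mem_squareContour {r : ℝ} (hr : 0 ≤ r) : (r : ℂ) * Complex.I ∈ squareContour r := by
  simp [squareContour, abs_of_nonneg hr, hr]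

theorem frontier_square_subset_squareContour {r : ℝ} (hr : 0 < r) :
    frontier (Ioo (-r) r ×ℂ Ioo (-r) r) ⊆ squareContour r := by
  have hlt : -r < r := by linarith
  intro z hz
  simp only [Complex.frontier_reProdIm, closure_Ioo hlt.ne, frontier_Ioo hlt, mem_union,
    Complex.mem_reProdIm, mem_Icc, mem_insert_iff, mem_singleton_iff] at hz
  rcases hz with ⟨hre, him⟩ | ⟨hre, him⟩
  · rw [squareContour, mem_ofPred_eq, max_eq_right_iff.2] <;>
      rcases him with him | him <;> simp [him, abs_of_pos hr, abs_le.2 hre]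
  · rw [squareContour, mem_ofPred_eq, max_eq_left_iff.2] <;>
      rcases hre with hre | hre <;> simp [hre, abs_of_pos hr, abs_le.2 him]

theorem norm_le_of_norm_le_on_squareContour {F : ℂ → ℂ} (hF : Differentiable ℂ F) {r C : ℝ}
    (hC : ∀ z ∈ squareContour r, ‖F z‖ ≤ C) {z : ℂ} (hz : ‖z‖ < r) : ‖F z‖ ≤ C := by
  refine Complex.norm_le_of_forall_mem_frontier_norm_le (U := Ioo (-r) r ×ℂ Ioo (-r) r)
    ((Metric.isBounded_Ioo _ _).reProdIm (Metric.isBounded_Ioo _ _)) hF.diffContOnCl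
    (fun w hw ↦ hC w (frontier_square_subset_squareContour ((norm_nonneg z).trans_lt hz) hw))
    (subset_closure ⟨abs_lt.1 ?_, abs_lt.1 ?_⟩)
  · exact (Complex.abs_re_le_norm z).trans_lt hz
  · exact (Complex.abs_im_le_norm z).trans_lt hz

theorem eq_zero_of_bounded_on_squareContours {f : ℂ → ℂ} (hf : Differentiable ℂ f) {r : ℕ → ℝ}
    (hr : Tendsto r atTop atTop) {C : ℝ}
    (hC : ∀ᶠ n in atTop, ∀ z ∈ squareContour (r n), ‖f (z ^ 2)‖ ≤ C)
    (hlim : Tendsto (fun n ↦ f ((r n * Complex.I) ^ 2)) atTop (𝓝 0)) : f = 0 := by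
  have hF : Differentiable ℂ fun z ↦ f (z ^ 2) := hf.comp (differentiable_id.pow 2)
  have hbdd : ∀ z, ‖f (z ^ 2)‖ ≤ C := fun z ↦ by
    obtain ⟨n, hn, hzn⟩ := (hC.and (hr.eventually_gt_atTop ‖z‖)).exists
    exact norm_le_of_norm_le_on_squareContour hF hn hzn
  have hconst : ∀ z, f (z ^ 2) = f (0 ^ 2) := fun z ↦
    hF.apply_eq_apply_of_bounded
      (isBounded_iff_forall_norm_le.2 ⟨C, by rintro _ ⟨w, rfl⟩; exact hbdd w⟩) z 0
  funext l
  obtain ⟨z, rfl⟩ := IsAlgClosed.exists_pow_nat_eq l (n := 2) two_pos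
  rw [hconst]
  simp only [hconst] at hlim
  exact tendsto_nhds_unique tendsto_const_nhds hlim

theorem norm_sin_le_exp_abs_im (z : ℂ) : ‖Complex.sin z‖ ≤ Real.exp |z.im| := by
  have hexp : ‖Complex.exp (-z * Complex.I)‖ ≤ Real.exp |z.im| ∧
      ‖Complex.exp (z * Complex.I)‖ ≤ Real.exp |z.im| := by
    simp [Complex.norm_exp, le_abs_self, neg_le_abs]
  have hsub := norm_sub_le (Complex.exp (-z * Complex.I)) (Complex.exp (z * Complex.I))
  rw [Complex.sin, norm_div, norm_mul, Complex.norm_I, mul_one, Complex.norm_ofNat]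
  linarith

theorem norm_sin_sq (z : ℂ) :
    ‖Complex.sin z‖ ^ 2 = Real.sin z.re ^ 2 + Real.sinh z.im ^ 2 := by
  rw [Complex.sin_eq, ← Complex.ofReal_sin, ← Complex.ofReal_cos, ← Complex.ofReal_sinh,
    ← Complex.ofReal_cosh, ← Complex.normSq_eq_norm_sq, ← Complex.ofReal_mul,
    ← Complex.ofReal_mul, Complex.normSq_add_mul_I, mul_pow, mul_pow, Real.cosh_sq]
  linear_combination Real.sinh z.im ^ 2 * Real.sin_sq_add_cos_sq z.re

/-- The half-sides of the squares in the `z`-plane that stay away from the zeros `nπ / L` of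
`sin (z * L)`. -/
noncomputable def sineRadius (L : ℝ) (n : ℕ) : ℝ := (n + 1 / 2) * Real.pi / L

theorem tendsto_sineRadius {L : ℝ} (hL : 0 < L) : Tendsto (sineRadius L) atTop atTop :=
  ((tendsto_atTop_add_const_right _ _ tendsto_natCast_atTop_atTop).atTop_mul_const
    Real.pi_pos).atTop_div_const hL

theorem exp_le_norm_sin_of_mem_squareContour {L : ℝ} (hL : 0 < L) {n : ℕ} {z : ℂ}
    (hz : z ∈ squareContour (sineRadius L n)) :
    Real.exp (|z.im| * L) / 4 ≤ ‖Complex.sin (z * L)‖ := by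
  have hcosh : Real.exp (|z.im| * L) / 2 ≤ Real.cosh (z.im * L) := by
    rw [← Real.cosh_abs, abs_mul, abs_of_pos hL, Real.cosh_eq]
    linarith [Real.exp_pos (-(|z.im| * L))]
  have hcosh_sq := Real.cosh_sq (z.im * L)
  have hexp := Real.exp_pos (|z.im| * L)
  refine le_of_sq_le_sq ?_ (norm_nonneg _)
  rw [norm_sin_sq, Complex.re_mul_ofReal, Complex.im_mul_ofReal]
  rcases max_choice |z.re| |z.im| with hmax | hmax <;> rw [squareContour, mem_ofPred_eq, hmax] at hz
  · have hre : |z.re * L| = n * Real.pi + Real.pi / 2 := by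
      rw [abs_mul, abs_of_pos hL, hz, sineRadius]
      field_simp
    have hsin : Real.sin (z.re * L) ^ 2 = 1 := by
      rw [Real.sin_sq, ← Real.cos_abs, hre, Real.cos_add_pi_div_two, Real.sin_nat_mul_pi]
      norm_num
    nlinarith
  · have him : 3 / 2 ≤ |z.im| * L := by
      rw [hz, sineRadius, div_mul_cancel₀ _ hL.ne']
      nlinarith [Real.pi_gt_three, (Nat.cast_nonneg n : (0 : ℝ) ≤ n)]
    have hexp_ge : 5 / 2 ≤ Real.exp (|z.im| * L) := by
      linarith [Real.add_one_le_exp (|z.im| * L)]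
    nlinarith [sq_nonneg (Real.sin (z.re * L))]

/-- `F` is of exponential type at most `κ` in `z = √l`, with decay `‖z‖⁻ᵐ`. The bound concerns
`F (z ^ 2)`, so no branch of the square root has to be chosen. -/
def HasExpUpperBound (κ : ℝ) (m : ℕ) (F : ℂ → ℂ) : Prop :=
  ∃ C, 0 ≤ C ∧ ∀ z : ℂ, 1 ≤ ‖z‖ → ‖F (z ^ 2)‖ ≤ C * Real.exp (κ * |z.im|) / ‖z‖ ^ m

/-- The lower bound matching `HasExpUpperBound`, required only on the squares of half-sides `r n`,
since the functions of interest have zeros. -/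
def HasExpLowerBound (r : ℕ → ℝ) (κ : ℝ) (m : ℕ) (F : ℂ → ℂ) : Prop :=
  ∃ c, 0 < c ∧ ∀ᶠ n in atTop, ∀ z ∈ squareContour (r n),
    c * Real.exp (κ * |z.im|) / ‖z‖ ^ m ≤ ‖F (z ^ 2)‖

section Growth

variable {κ κ' : ℝ} {m m' : ℕ} {F G f D : ℂ → ℂ} {r : ℕ → ℝ}

namespace HasExpUpperBound

theorem mono (hF : HasExpUpperBound κ m F) (hκ : κ ≤ κ') (hm : m' ≤ m) :
    HasExpUpperBound κ' m' F := by
  obtain ⟨C, hC, hFC⟩ := hF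
  refine ⟨C, hC, fun z hz ↦ (hFC z hz).trans ?_⟩
  gcongr

theorem add (hF : HasExpUpperBound κ m F) (hG : HasExpUpperBound κ m G) :
    HasExpUpperBound κ m fun l ↦ F l + G l := by
  obtain ⟨C, hC, hFC⟩ := hF
  obtain ⟨C', hC', hGC⟩ := hG
  refine ⟨C + C', add_nonneg hC hC', fun z hz ↦ ?_⟩
  rw [add_mul, add_div]
  exact norm_add_le_of_le (hFC z hz) (hGC z hz)

theorem neg (hF : HasExpUpperBound κ m F) : HasExpUpperBound κ m fun l ↦ -F l := by
  simpa only [HasExpUpperBound, norm_neg] using hF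

theorem sub (hF : HasExpUpperBound κ m F) (hG : HasExpUpperBound κ m G) :
    HasExpUpperBound κ m fun l ↦ F l - G l := by
  simpa only [sub_eq_add_neg] using hF.add hG.neg

theorem mul (hF : HasExpUpperBound κ m F) (hG : HasExpUpperBound κ' m' G) :
    HasExpUpperBound (κ + κ') (m + m') fun l ↦ F l * G l := by
  obtain ⟨C, hC, hFC⟩ := hF
  obtain ⟨C', hC', hGC⟩ := hG
  refine ⟨C * C', mul_nonneg hC hC', fun z hz ↦ ?_⟩
  calc ‖F (z ^ 2) * G (z ^ 2)‖
      ≤ C * Real.exp (κ * |z.im|) / ‖z‖ ^ m * (C' * Real.exp (κ' * |z.im|) / ‖z‖ ^ m') :=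
        norm_mul_le_of_le (hFC z hz) (hGC z hz)
    _ = C * C' * Real.exp ((κ + κ') * |z.im|) / ‖z‖ ^ (m + m') := by
        rw [add_mul, Real.exp_add, pow_add]
        ring

end HasExpUpperBound

theorem HasExpLowerBound.mul (hF : HasExpLowerBound r κ m F) (hG : HasExpLowerBound r κ' m' G) :
    HasExpLowerBound r (κ + κ') (m + m') fun l ↦ F l * G l := by
  obtain ⟨c, hc, hFc⟩ := hF
  obtain ⟨c', hc', hGc⟩ := hG
  refine ⟨c * c', mul_pos hc hc', ?_⟩
  filter_upwards [hFc, hGc] with n hFn hGn z hz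
  calc c * c' * Real.exp ((κ + κ') * |z.im|) / ‖z‖ ^ (m + m')
      = c * Real.exp (κ * |z.im|) / ‖z‖ ^ m * (c' * Real.exp (κ' * |z.im|) / ‖z‖ ^ m') := by
        rw [add_mul, Real.exp_add, pow_add]
        ring
    _ ≤ ‖F (z ^ 2)‖ * ‖G (z ^ 2)‖ := by
        gcongr
        exacts [hFn z hz, hGn z hz]
    _ = ‖F (z ^ 2) * G (z ^ 2)‖ := (norm_mul _ _).symm

theorem exists_norm_le_of_growth_mul (hr : Tendsto r atTop atTop) (hD : HasExpLowerBound r κ m D)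
    (hN : HasExpUpperBound κ' m' fun l ↦ f l * D l) (hm : m ≤ m') :
    ∃ C, 0 ≤ C ∧ ∀ᶠ n in atTop, ∀ z ∈ squareContour (r n),
      ‖f (z ^ 2)‖ ≤ C * Real.exp ((κ' - κ) * |z.im|) / ‖z‖ ^ (m' - m) := by
  obtain ⟨c, hc, hDc⟩ := hD
  obtain ⟨C, hC, hNC⟩ := hN
  refine ⟨C / c, div_nonneg hC hc.le, ?_⟩
  filter_upwards [hDc, hr.eventually_ge_atTop 1] with n hDn hrn z hz
  have hz1 : 1 ≤ ‖z‖ := hrn.trans (le_norm_of_mem_squareContour hz)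
  have hz0 : 0 < ‖z‖ := zero_lt_one.trans_le hz1
  have hpos : 0 < c * Real.exp (κ * |z.im|) / ‖z‖ ^ m := by positivity
  calc ‖f (z ^ 2)‖
      ≤ C * Real.exp (κ' * |z.im|) / ‖z‖ ^ m' / (c * Real.exp (κ * |z.im|) / ‖z‖ ^ m) := by
        rw [le_div_iff₀ hpos]
        calc _ ≤ ‖f (z ^ 2)‖ * ‖D (z ^ 2)‖ := by gcongr; exact hDn z hz
          _ = ‖f (z ^ 2) * D (z ^ 2)‖ := (norm_mul _ _).symm
          _ ≤ _ := hNC z hz1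
    _ = C / c * Real.exp ((κ' - κ) * |z.im|) / ‖z‖ ^ (m' - m) := by
        rw [sub_mul, Real.exp_sub, pow_sub₀ _ hz0.ne' hm]
        field_simp

theorem tendsto_exp_div_pow {δ : ℝ} (hδ : δ ≤ 0) {j : ℕ} (hj : δ < 0 ∨ j ≠ 0) :
    Tendsto (fun x : ℝ ↦ Real.exp (δ * x) / x ^ j) atTop (𝓝 0) := by
  rcases hj with hδ | hj
  · have hexp : Tendsto (fun x : ℝ ↦ Real.exp (δ * x)) atTop (𝓝 0) :=
      Real.tendsto_exp_atBot.comp (tendsto_id.const_mul_atTop_of_neg hδ)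
    refine squeeze_zero' ?_ ?_ hexp <;> filter_upwards [eventually_ge_atTop 1] with x hx
    · positivity
    · exact div_le_self (Real.exp_pos _).le (one_le_pow₀ hx)
  · have hpow : Tendsto (fun x : ℝ ↦ (x ^ j)⁻¹) atTop (𝓝 0) :=
      tendsto_inv_atTop_zero.comp (tendsto_pow_atTop hj)
    refine squeeze_zero' ?_ ?_ hpow <;> filter_upwards [eventually_ge_atTop 0] with x hx
    · positivity
    · rw [div_eq_mul_inv]
      exact mul_le_of_le_one_left (by positivity)
        (Real.exp_le_one_iff.2 (mul_nonpos_of_nonpos_of_nonneg hδ hx))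

theorem eq_zero_of_growth_mul (hf : Differentiable ℂ f) (hr : Tendsto r atTop atTop)
    (hD : HasExpLowerBound r κ m D) (hN : HasExpUpperBound κ' m' fun l ↦ f l * D l)
    (hκ : κ' ≤ κ) (hm : m ≤ m') (hlt : κ' < κ ∨ m < m') : f = 0 := by
  obtain ⟨C, hC, hbound⟩ := exists_norm_le_of_growth_mul hr hD hN hm
  refine eq_zero_of_bounded_on_squareContours hf hr (C := C) ?_ ?_
  · filter_upwards [hbound, hr.eventually_ge_atTop 1] with n hn hrn z hz
    have hexp : Real.exp ((κ' - κ) * |z.im|) ≤ 1 :=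
      Real.exp_le_one_iff.2 (mul_nonpos_of_nonpos_of_nonneg (sub_nonpos.2 hκ) (abs_nonneg _))
    calc ‖f (z ^ 2)‖ ≤ C * Real.exp ((κ' - κ) * |z.im|) / ‖z‖ ^ (m' - m) := hn z hz
      _ ≤ C * 1 / 1 := by
        gcongr
        exact one_le_pow₀ (hrn.trans (le_norm_of_mem_squareContour hz))
      _ = C := by ring
  · have hlim := (((tendsto_exp_div_pow (sub_nonpos.2 hκ) (j := m' - m)
      (hlt.imp sub_neg.2 Nat.sub_ne_zero_of_lt)).comp hr).const_mul C)
    rw [mul_zero] at hlim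
    refine squeeze_zero_norm' ?_ hlim
    filter_upwards [hbound, hr.eventually_ge_atTop 0] with n hn hrn
    simpa [abs_of_nonneg hrn, mul_div_assoc] using hn _ (mul_I_mem_squareContour hrn)

end Growth

/-- The quotient `A / B` of entire functions, extended to the zeros of `B` by l'Hôpital's rule. It
is entire when the zeros of `B` are simple and are zeros of `A`. -/
noncomputable def entireQuotient (A B : ℂ → ℂ) (z : ℂ) : ℂ :=
  open Classical in if B z = 0 then deriv A z / deriv B z else A z / B z

section EntireQuotient

variable {A B : ℂ → ℂ}

theorem entireQuotient_of_eq_zero {z : ℂ} (hz : B z = 0) :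
    entireQuotient A B z = deriv A z / deriv B z :=
  if_pos hz

theorem entireQuotient_of_ne_zero {z : ℂ} (hz : B z ≠ 0) : entireQuotient A B z = A z / B z :=
  if_neg hz

theorem entireQuotient_mul_cancel (hAB : ∀ z, B z = 0 → A z = 0) (z : ℂ) :
    entireQuotient A B z * B z = A z := by
  by_cases hz : B z = 0
  · rw [hz, mul_zero, hAB z hz]
  · rw [entireQuotient_of_ne_zero hz, div_mul_cancel₀ _ hz]

theorem differentiable_dslope {f : ℂ → ℂ} (hf : Differentiable ℂ f) (c : ℂ) :
    Differentiable ℂ (dslope f c) :=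
  differentiableOn_univ.1 ((Complex.differentiableOn_dslope univ_mem).2 hf.differentiableOn)

theorem dslope_div_dslope_of_eq_zero {c z : ℂ} (hA : A c = 0) (hB : B c = 0)
    (hz : dslope B c z ≠ 0) : dslope A c z / dslope B c z = entireQuotient A B z := by
  rcases eq_or_ne z c with rfl | hzc
  · rw [entireQuotient_of_eq_zero hB, dslope_same, dslope_same]
  · have hAz := sub_smul_dslope A c z
    have hBz := sub_smul_dslope B c z
    rw [hA, sub_zero, smul_eq_mul] at hAz
    rw [hB, sub_zero, smul_eq_mul] at hBz
    have hsub : z - c ≠ 0 := sub_ne_zero.2 hzc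
    rw [entireQuotient_of_ne_zero (hBz ▸ mul_ne_zero hsub hz), ← hAz, ← hBz,
      mul_div_mul_left _ _ hsub]

theorem differentiable_entireQuotient (hA : Differentiable ℂ A) (hB : Differentiable ℂ B)
    (hsimple : ∀ z, B z = 0 → deriv B z ≠ 0) (hAB : ∀ z, B z = 0 → A z = 0) :
    Differentiable ℂ (entireQuotient A B) := by
  intro c
  by_cases hc : B c = 0
  · have hne : dslope B c c ≠ 0 := by
      rw [dslope_same]
      exact hsimple c hc
    refine ((differentiable_dslope hA c c).div (differentiable_dslope hB c c)
      hne).congr_of_eventuallyEq ?_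
    filter_upwards [(differentiable_dslope hB c).continuous.continuousAt.eventually_ne hne]
      with z hz
    exact (dslope_div_dslope_of_eq_zero (hAB c hc) hc hz).symm
  · refine ((hA c).div (hB c) hc).congr_of_eventuallyEq ?_
    filter_upwards [(hB c).continuousAt.eventually_ne hc] with z hz
    exact entireQuotient_of_ne_zero hz

theorem eq_zero_of_mul_eq_zero_of_differentiable (hA : Differentiable ℂ A)
    (hB : Differentiable ℂ B) (hmul : ∀ z, A z * B z = 0) {c : ℂ} (hc : A c ≠ 0) (z : ℂ) :
    B z = 0 := by
  have hB_analytic : AnalyticOnNhd ℂ B univ := fun z _ ↦ hB.analyticAt z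
  refine hB_analytic.eqOn_zero_of_preconnected_of_eventuallyEq_zero isPreconnected_univ
    (mem_univ c) ?_ (mem_univ z)
  filter_upwards [(hA c).continuousAt.eventually_ne hc] with z hz
  exact (mul_eq_zero.1 (hmul z)).resolve_left hz

end EntireQuotient

section DirichletSeries

variable {ι : Type*}

/-- The measure with mass `c i` at the point `L i` (negative values of `c` count as `0`). -/
noncomputable def pointMasses (c L : ι → ℝ) : Measure ℝ :=
  Measure.sum fun i ↦ ENNReal.ofReal (c i) • Measure.dirac (L i)

theorem isFiniteMeasure_pointMasses {c : ι → ℝ} (hc : Summable c) (L : ι → ℝ) :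
    IsFiniteMeasure (pointMasses c L) where
  measure_univ_lt_top := by
    simpa [pointMasses, Measure.sum_apply _ MeasurableSet.univ] using hc.tsum_ofReal_lt_top

theorem integral_pointMasses [Countable ι] {c : ι → ℝ} (hc : 0 ≤ c) (L : ι → ℝ) (f : ℝ → ℂ) :
    ∫ x, f x ∂pointMasses c L = ∑' i, (c i : ℂ) * f (L i) := by
  rw [pointMasses, integral_sum_dirac (by simp)]
  simp only [ENNReal.toReal_ofReal (hc _), Complex.real_smul]

theorem tsum_mul_eq_of_tsum_exp_eq [Countable ι] {c d L : ι → ℝ} (hc : Summable c) (hc0 : 0 ≤ c)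
    (hd : Summable d) (hd0 : 0 ≤ d)
    (hexp : ∀ s : ℝ, ∑' i, (c i : ℂ) * Complex.exp (s * L i * Complex.I) =
      ∑' i, (d i : ℂ) * Complex.exp (s * L i * Complex.I)) (f : ℝ → ℂ) :
    ∑' i, (c i : ℂ) * f (L i) = ∑' i, (d i : ℂ) * f (L i) := by
  have := isFiniteMeasure_pointMasses hc L
  have := isFiniteMeasure_pointMasses hd L
  have hmeasure : pointMasses c L = pointMasses d L := by
    refine Measure.ext_of_charFun (funext fun s ↦ ?_)
    rw [charFun_apply_real, charFun_apply_real, integral_pointMasses hc0,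
      integral_pointMasses hd0, hexp]
  rw [← integral_pointMasses hc0, ← integral_pointMasses hd0, hmeasure]

/-- The positive and the negative part of `B` give finite measures with the same characteristic
function, hence equal measures. -/
theorem tsum_fiber_eq_zero_of_tsum_exp_eq_zero [Countable ι] {B L : ι → ℝ} (hB : Summable B)
    (hexp : ∀ s : ℝ, ∑' i, (B i : ℂ) * Complex.exp (s * L i * Complex.I) = 0) (ν : ℝ) :
    ∑' i : L ⁻¹' {ν}, B i = 0 := by
  have hpos : Summable fun i ↦ (B i)⁺ :=
    hB.abs.of_nonneg_of_le (fun _ ↦ posPart_nonneg _)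
      fun _ ↦ sup_le (le_abs_self _) (abs_nonneg _)
  have hneg : Summable fun i ↦ (B i)⁻ :=
    hB.abs.of_nonneg_of_le (fun _ ↦ negPart_nonneg _)
      fun _ ↦ sup_le (neg_le_abs _) (abs_nonneg _)
  have hsplit : ∀ f : ℝ → ℂ, (∀ x, ‖f x‖ ≤ 1) → ∑' i, (B i : ℂ) * f (L i) =
      ∑' i, (((B i)⁺ : ℝ) : ℂ) * f (L i) - ∑' i, (((B i)⁻ : ℝ) : ℂ) * f (L i) := by
    intro f hf
    have hsummable : ∀ c : ι → ℝ, Summable c → 0 ≤ c → Summable fun i ↦ (c i : ℂ) * f (L i) :=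
      fun c hc hc0 ↦ hc.of_norm_bounded fun i ↦ by
        rw [norm_mul, Complex.norm_real, Real.norm_of_nonneg (hc0 i)]
        exact mul_le_of_le_one_right (hc0 i) (hf _)
    rw [← (hsummable _ hpos fun _ ↦ posPart_nonneg _).tsum_sub
      (hsummable _ hneg fun _ ↦ negPart_nonneg _)]
    simp only [← sub_mul, ← Complex.ofReal_sub, posPart_sub_negPart]
  have htest := tsum_mul_eq_of_tsum_exp_eq hpos (fun _ ↦ posPart_nonneg _) hneg
    (fun _ ↦ negPart_nonneg _) (L := L) fun s ↦ by
      refine sub_eq_zero.1 ((hsplit (fun x ↦ Complex.exp (s * x * Complex.I)) fun x ↦ ?_).symm.trans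
        (hexp s))
      rw [← Complex.ofReal_mul, Complex.norm_exp_ofReal_mul_I]
  have hpoint := hsplit (({ν} : Set ℝ).indicator 1) fun x ↦
    (norm_indicator_le_norm_self _ x).trans (by simp)
  rw [htest, sub_self] at hpoint
  rw [tsum_subtype, ← Complex.ofReal_eq_zero, Complex.ofReal_tsum, ← hpoint]
  refine tsum_congr fun i ↦ ?_
  by_cases hi : L i = ν <;> simp [indicator, hi]

theorem differentiableOn_dirichletSeries {A L : ι → ℝ} (hL : 0 ≤ L) {t₀ : ℝ}
    (hs : Summable fun i ↦ |A i| * Real.exp (-L i * t₀)) :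
    DifferentiableOn ℂ (fun w ↦ ∑' i, (A i : ℂ) * Complex.exp (-L i * w)) {w | t₀ < w.re} := by
  refine Complex.differentiableOn_tsum_of_summable_norm hs
    (fun i ↦ Differentiable.differentiableOn (by fun_prop))
    (isOpen_lt continuous_const Complex.continuous_re) fun i w hw ↦ ?_
  rw [norm_mul, Complex.norm_real, Complex.norm_exp, ← Complex.ofReal_neg, Complex.re_ofReal_mul,
    Real.norm_eq_abs]
  have hre : -L i * w.re ≤ -L i * t₀ :=
    mul_le_mul_of_nonpos_left (le_of_lt hw) (neg_nonpos.2 (hL i))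
  gcongr

theorem tendsto_ofReal_nhdsNE (x : ℝ) : Tendsto ((↑) : ℝ → ℂ) (𝓝[≠] x) (𝓝[≠] (x : ℂ)) :=
  tendsto_nhdsWithin_of_tendsto_nhds_of_eventually_within _
    (Complex.continuous_ofReal.continuousAt.tendsto.mono_left nhdsWithin_le_nhds)
    (eventually_mem_nhdsWithin.mono fun _ ht ↦ Complex.ofReal_injective.ne ht)

theorem dirichletSeries_eq_zero_of_frequently_eq_zero {A L : ι → ℝ} (hL : 0 ≤ L)
    (hs : ∀ t > 0, Summable fun i ↦ |A i| * Real.exp (-L i * t)) {T : ℝ} (hT : 0 < T)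
    (h : ∃ᶠ t in 𝓝[≠] T, ∑' i, A i * Real.exp (-L i * t) = 0) {w : ℂ} (hw : 0 < w.re) :
    ∑' i, (A i : ℂ) * Complex.exp (-L i * w) = 0 := by
  obtain ⟨t₀, ht₀, ht₀w⟩ := exists_between (lt_min hT hw)
  have hopen : IsOpen {w : ℂ | t₀ < w.re} := isOpen_lt continuous_const Complex.continuous_re
  refine ((differentiableOn_dirichletSeries hL (hs t₀ ht₀)).analyticOnNhd
    hopen).eqOn_zero_of_preconnected_of_frequently_eq_zero (z₀ := (T : ℂ))
    (convex_halfSpace_re_gt _).isPreconnected (ht₀w.trans_le (min_le_left _ _)) ?_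
    (ht₀w.trans_le (min_le_right _ _))
  refine (tendsto_ofReal_nhdsNE T).frequently (h.mono fun t ht ↦ ?_)
  simpa only [Complex.ofReal_tsum, Complex.ofReal_mul, Complex.ofReal_exp, Complex.ofReal_neg,
    Complex.ofReal_zero] using congrArg ((↑) : ℝ → ℂ) ht

theorem tsum_fiber_eq_zero_of_frequently_eq_zero_of_nonneg [Countable ι] {A L : ι → ℝ} (hL : 0 ≤ L)
    (hs : ∀ t > 0, Summable fun i ↦ |A i| * Real.exp (-L i * t)) {T : ℝ} (hT : 0 < T)
    (h : ∃ᶠ t in 𝓝[≠] T, ∑' i, A i * Real.exp (-L i * t) = 0) (ν : ℝ) :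
    ∑' i : L ⁻¹' {ν}, A i = 0 := by
  have hfiber := tsum_fiber_eq_zero_of_tsum_exp_eq_zero
    (B := fun i ↦ A i * Real.exp (-L i * T)) (L := L) ?_ (fun s ↦ ?_) ν
  · have hexp : ∀ i : L ⁻¹' {ν}, A i * Real.exp (-L i * T) = A i * Real.exp (-ν * T) :=
      fun i ↦ by rw [mem_singleton_iff.1 i.2]
    simpa only [hexp, tsum_mul_right, mul_eq_zero, Real.exp_ne_zero, or_false] using hfiber
  · refine (hs T hT).of_norm_bounded fun i ↦ ?_
    rw [norm_mul, Real.norm_eq_abs, Real.norm_of_nonneg (Real.exp_pos _).le]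
  -- On the line `re w = T` the Dirichlet series becomes a summable trigonometric series.
  · have hzero := dirichletSeries_eq_zero_of_frequently_eq_zero hL hs hT h
      (w := T - s * Complex.I) (by simpa using hT)
    rw [← hzero]
    refine tsum_congr fun i ↦ ?_
    push_cast
    rw [mul_assoc, ← Complex.exp_add]
    ring_nf

theorem tsum_fiber_eq_zero_of_frequently_eq_zero [Countable ι] {A L : ι → ℝ}
    (hL : BddBelow (range L)) (hs : ∀ t > 0, Summable fun i ↦ |A i| * Real.exp (-L i * t)) {T : ℝ}
    (hT : 0 < T) (h : ∃ᶠ t in 𝓝[≠] T, ∑' i, A i * Real.exp (-L i * t) = 0) (ν : ℝ) :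
    ∑' i : L ⁻¹' {ν}, A i = 0 := by
  obtain ⟨β, hβ⟩ := hL
  have hexp : ∀ i t, Real.exp (-(L i - β) * t) = Real.exp (-L i * t) * Real.exp (β * t) :=
    fun i t ↦ by rw [← Real.exp_add]; ring_nf
  have hfiber := tsum_fiber_eq_zero_of_frequently_eq_zero_of_nonneg (A := A)
    (L := fun i ↦ L i - β) (fun i ↦ sub_nonneg.2 (hβ (mem_range_self i))) (fun t ht ↦ ?_) hT
    (h.mono fun t ht ↦ ?_) (ν - β)
  · have hpreimage : (fun i ↦ L i - β) ⁻¹' {ν - β} = L ⁻¹' {ν} := by ext i; simp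
    rwa [hpreimage] at hfiber
  · simpa only [hexp, mul_assoc] using (hs t ht).mul_right (Real.exp (β * t))
  · simp only [hexp, ← mul_assoc, tsum_mul_right, ht, zero_mul]

theorem summable_mul_exp_of_abs {A L : ι → ℝ} {t : ℝ}
    (hs : Summable fun i ↦ |A i| * Real.exp (-L i * t)) :
    Summable fun i ↦ A i * Real.exp (-L i * t) :=
  hs.of_norm_bounded fun i ↦ by
    rw [norm_mul, Real.norm_eq_abs, Real.norm_of_nonneg (Real.exp_pos _).le]

theorem summable_fiber {A L : ι → ℝ} {t : ℝ} (hs : Summable fun i ↦ A i * Real.exp (-L i * t))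
    (ν : ℝ) : Summable fun i : L ⁻¹' {ν} ↦ A i := by
  refine ((hs.subtype (L ⁻¹' {ν})).mul_right (Real.exp (ν * t))).congr fun i ↦ ?_
  have hi : L i.1 = ν := i.2
  rw [Function.comp_apply, hi, mul_assoc, ← Real.exp_add, neg_mul, neg_add_cancel, Real.exp_zero,
    mul_one]

theorem tsum_fiber_eq_of_frequently_eq {ι' : Type*} [Countable ι] [Countable ι'] {A L : ι → ℝ}
    {A' L' : ι' → ℝ} (hL : BddBelow (range L)) (hL' : BddBelow (range L'))
    (hs : ∀ t > 0, Summable fun i ↦ |A i| * Real.exp (-L i * t))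
    (hs' : ∀ t > 0, Summable fun i ↦ |A' i| * Real.exp (-L' i * t)) {T : ℝ} (hT : 0 < T)
    (h : ∃ᶠ t in 𝓝[≠] T,
      ∑' i, A i * Real.exp (-L i * t) = ∑' i, A' i * Real.exp (-L' i * t)) (ν : ℝ) :
    ∑' i : L ⁻¹' {ν}, A i = ∑' i : L' ⁻¹' {ν}, A' i := by
  have hfiber := tsum_fiber_eq_zero_of_frequently_eq_zero (A := Sum.elim A fun i ↦ -A' i)
    (L := Sum.elim L L') (by rw [Sum.elim_range]; exact hL.union hL')
    (fun t ht ↦ .sum _ (hs t ht) (by simpa [Function.comp_def] using hs' t ht)) hT ?_ ν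
  · rw [tsum_subtype, Summable.tsum_sum] at hfiber
    · rw [tsum_subtype, tsum_subtype, ← sub_eq_zero, sub_eq_add_neg, ← tsum_neg, ← hfiber]
      congr 1
      refine tsum_congr fun i ↦ ?_
      by_cases hi : L' i = ν <;> simp [indicator, hi]
    · exact summable_subtype_iff_indicator.1
        (summable_fiber (summable_mul_exp_of_abs (hs 1 one_pos)) ν)
    · exact summable_subtype_iff_indicator.1
        (summable_fiber (summable_mul_exp_of_abs (hs' 1 one_pos)) ν).neg
  · have hpos : ∀ᶠ t in 𝓝[≠] T, 0 < t := (eventually_gt_nhds hT).filter_mono nhdsWithin_le_nhds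
    refine (h.and_eventually hpos).mono fun t ⟨ht, htpos⟩ ↦ ?_
    rw [Summable.tsum_sum]
    · simp only [Sum.elim_inl, Sum.elim_inr, neg_mul (A' _), tsum_neg, ht, add_neg_cancel]
    · exact summable_mul_exp_of_abs (hs t htpos)
    · simpa [Function.comp_def] using (summable_mul_exp_of_abs (hs' t htpos)).neg

end DirichletSeries

theorem intervalIntegrable_of_mem_Icc {E : Type*} [NormedAddCommGroup E] {f : ℝ → E} {a b x y : ℝ}
    (hf : ContinuousOn f (Icc a b)) (hx : x ∈ Icc a b) (hy : y ∈ Icc a b) :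
    IntervalIntegrable f volume x y :=
  (hf.mono (ordConnected_Icc.uIcc_subset hx hy)).intervalIntegrable

section IntervalCalculus

variable {E : Type*} [NormedAddCommGroup E] [NormedSpace ℝ E]

theorem norm_le_norm_mul_exp_of_norm_deriv_le_of_le {f f' : ℝ → E} {K a b : ℝ}
    (hf : ∀ x ∈ Icc a b, HasDerivWithinAt f (f' x) (Icc a b) x)
    (hbound : ∀ x ∈ Icc a b, ‖f' x‖ ≤ K * ‖f x‖) (hab : a ≤ b) :
    ‖f b‖ ≤ ‖f a‖ * Real.exp (K * (b - a)) := by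
  rw [← gronwallBound_ε0]
  refine norm_le_gronwallBound_of_norm_deriv_right_le (f' := f') ?_ ?_ le_rfl ?_ b
    (right_mem_Icc.2 hab)
  · exact fun x hx ↦ (hf x hx).continuousWithinAt
  · exact fun x hx ↦
      (hf x (Ico_subset_Icc_self hx)).mono_of_mem_nhdsWithin (Icc_mem_nhdsGE_of_mem hx)
  · simpa only [add_zero] using fun x hx ↦ hbound x (Ico_subset_Icc_self hx)

theorem norm_le_norm_mul_exp_of_norm_deriv_le {f f' : ℝ → E} {K a b x y : ℝ}
    (hf : ∀ x ∈ Icc a b, HasDerivWithinAt f (f' x) (Icc a b) x)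
    (hbound : ∀ x ∈ Icc a b, ‖f' x‖ ≤ K * ‖f x‖) (hx : x ∈ Icc a b) (hy : y ∈ Icc a b) :
    ‖f y‖ ≤ ‖f x‖ * Real.exp (K * |y - x|) := by
  rcases le_total x y with hxy | hyx
  · have hsub : Icc x y ⊆ Icc a b := Icc_subset_Icc hx.1 hy.2
    rw [abs_of_nonneg (sub_nonneg.2 hxy)]
    exact norm_le_norm_mul_exp_of_norm_deriv_le_of_le
      (fun s hs ↦ (hf s (hsub hs)).mono hsub) (fun s hs ↦ hbound s (hsub hs)) hxy
  · have hmaps : MapsTo (fun s : ℝ ↦ -s) (Icc (-x) (-y)) (Icc a b) := fun s hs ↦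
      ⟨by linarith [hs.2, hy.1], by linarith [hs.1, hx.2]⟩
    have hreflect := norm_le_norm_mul_exp_of_norm_deriv_le_of_le
      (f := fun s ↦ f (-s)) (f' := fun s ↦ (-1 : ℝ) • f' (-s)) (K := K)
      (fun s hs ↦ (hf (-s) (hmaps hs)).scomp s (hasDerivAt_neg s).hasDerivWithinAt hmaps)
      (fun s hs ↦ by simpa only [neg_one_smul, norm_neg] using hbound (-s) (hmaps hs))
      (neg_le_neg hyx)
    rw [abs_of_nonpos (sub_nonpos.2 hyx)]
    simpa only [neg_neg, neg_sub, neg_sub_neg] using hreflect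

end IntervalCalculus

/-- `y` solves `-y'' + V y = l y` on `[0, 1]` with derivative `y'`; at the endpoints the
derivatives are one-sided. -/
structure IsSchrodingerSolution (V : ℝ → ℝ) (l : ℂ) (y y' : ℝ → ℂ) : Prop where
  hasDerivWithinAt : ∀ x ∈ Icc (0 : ℝ) 1, HasDerivWithinAt y (y' x) (Icc 0 1) x
  hasDerivWithinAt_deriv : ∀ x ∈ Icc (0 : ℝ) 1,
    HasDerivWithinAt y' ((V x - l) * y x) (Icc 0 1) x

namespace IsSchrodingerSolution

variable {V W : ℝ → ℝ} {l m : ℂ} {y y' v v' : ℝ → ℂ} {a b x : ℝ}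

theorem continuousOn (hy : IsSchrodingerSolution V l y y') : ContinuousOn y (Icc 0 1) :=
  fun x hx ↦ (hy.hasDerivWithinAt x hx).continuousWithinAt

theorem continuousOn_deriv (hy : IsSchrodingerSolution V l y y') :
    ContinuousOn y' (Icc 0 1) :=
  fun x hx ↦ (hy.hasDerivWithinAt_deriv x hx).continuousWithinAt

theorem hasDerivAt (hy : IsSchrodingerSolution V l y y') (hx : x ∈ Ioo (0 : ℝ) 1) :
    HasDerivAt y (y' x) x :=
  (hy.hasDerivWithinAt x (Ioo_subset_Icc_self hx)).hasDerivAt (Icc_mem_nhds hx.1 hx.2)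

theorem hasDerivAt_deriv (hy : IsSchrodingerSolution V l y y') (hx : x ∈ Ioo (0 : ℝ) 1) :
    HasDerivAt y' ((V x - l) * y x) x :=
  (hy.hasDerivWithinAt_deriv x (Ioo_subset_Icc_self hx)).hasDerivAt (Icc_mem_nhds hx.1 hx.2)

theorem linearCombination (hy : IsSchrodingerSolution V l y y')
    (hv : IsSchrodingerSolution V l v v') (α β : ℂ) :
    IsSchrodingerSolution V l (fun x ↦ α * y x + β * v x) (fun x ↦ α * y' x + β * v' x) where
  hasDerivWithinAt x hx :=
    ((hy.hasDerivWithinAt x hx).const_mul α).add ((hv.hasDerivWithinAt x hx).const_mul β)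
  hasDerivWithinAt_deriv x hx := by
    refine (((hy.hasDerivWithinAt_deriv x hx).const_mul α).add
      ((hv.hasDerivWithinAt_deriv x hx).const_mul β)).congr_deriv ?_
    ring

theorem conj (hy : IsSchrodingerSolution V l y y') :
    IsSchrodingerSolution V (starRingEnd ℂ l) (fun x ↦ starRingEnd ℂ (y x))
      (fun x ↦ starRingEnd ℂ (y' x)) where
  hasDerivWithinAt x hx := (hy.hasDerivWithinAt x hx).star
  hasDerivWithinAt_deriv x hx := (hy.hasDerivWithinAt_deriv x hx).star.congr_deriv (by simp)

theorem wronskian_sub_wronskian_of_eqOn (hy : IsSchrodingerSolution V l y y')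
    (hv : IsSchrodingerSolution W m v v') (ha : a ∈ Icc (0 : ℝ) 1) (hb : b ∈ Icc (0 : ℝ) 1)
    (hab : a ≤ b) (hVW : EqOn V W (Ioo a b)) :
    (y b * v' b - y' b * v b) - (y a * v' a - y' a * v a) = (l - m) * ∫ x in a..b, y x * v x := by
  have hsub : Icc a b ⊆ Icc (0 : ℝ) 1 := Icc_subset_Icc ha.1 hb.2
  have hcont : ContinuousOn (fun x ↦ y x * v' x - y' x * v x) (Icc a b) :=
    ((hy.continuousOn.mul hv.continuousOn_deriv).sub
      (hy.continuousOn_deriv.mul hv.continuousOn)).mono hsub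
  rw [← intervalIntegral.integral_const_mul]
  refine (intervalIntegral.integral_eq_sub_of_hasDerivAt_of_le hab hcont (fun x hx ↦ ?_) ?_).symm
  · have hx01 := Ioo_subset_Ioo ha.1 hb.2 hx
    refine (((hy.hasDerivAt hx01).mul (hv.hasDerivAt_deriv hx01)).sub
      ((hy.hasDerivAt_deriv hx01).mul (hv.hasDerivAt hx01))).congr_deriv ?_
    rw [hVW hx]
    ring
  · exact intervalIntegrable_of_mem_Icc
      (continuousOn_const.mul (hy.continuousOn.mul hv.continuousOn)) ha hb

theorem wronskian_eq_wronskian (hy : IsSchrodingerSolution V l y y')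
    (hv : IsSchrodingerSolution V l v v') (ha : a ∈ Icc (0 : ℝ) 1) (hb : b ∈ Icc (0 : ℝ) 1) :
    y b * v' b - y' b * v b = y a * v' a - y' a * v a := by
  rcases le_total a b with hab | hba
  · linear_combination hy.wronskian_sub_wronskian_of_eqOn hv ha hb hab (eqOn_refl V _)
  · linear_combination -hy.wronskian_sub_wronskian_of_eqOn hv hb ha hba (eqOn_refl V _)

end IsSchrodingerSolution

/-- The energy of a solution `y` with derivative `y'`, weighted by the frequency `w`; its growth
rate is controlled by `‖w² - l‖ / w`. -/
noncomputable def weightedEnergy (w : ℝ) (y y' : ℝ → ℂ) (x : ℝ) : ℝ :=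
  ‖y' x‖ ^ 2 + w ^ 2 * ‖y x‖ ^ 2

theorem norm_weightedEnergy (w : ℝ) (y y' : ℝ → ℂ) (x : ℝ) :
    ‖weightedEnergy w y y' x‖ = weightedEnergy w y y' x :=
  Real.norm_of_nonneg (by unfold weightedEnergy; positivity)

theorem norm_ofReal_norm_sq_sub_sq (z : ℂ) : ‖((‖z‖ : ℂ) ^ 2 - z ^ 2)‖ = 2 * |z.im| * ‖z‖ := by
  have hfactor : (‖z‖ : ℂ) ^ 2 - z ^ 2 = (starRingEnd ℂ z - z) * z := by
    rw [← Complex.conj_mul']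
    ring
  rw [hfactor, norm_mul, ← norm_neg, neg_sub, Complex.sub_conj, norm_mul, Complex.norm_I,
    Complex.norm_real, mul_one, Real.norm_eq_abs, abs_mul, abs_two]

namespace IsSchrodingerSolution

variable {V : ℝ → ℝ} {l : ℂ} {y y' v v' : ℝ → ℂ} {a x M w : ℝ}

theorem hasDerivWithinAt_weightedEnergy (hy : IsSchrodingerSolution V l y y') (w : ℝ)
    (hx : x ∈ Icc (0 : ℝ) 1) :
    HasDerivWithinAt (weightedEnergy w y y')
      (2 * inner ℝ (y' x) ((V x + (w ^ 2 - l)) * y x)) (Icc 0 1) x := by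
  refine ((hy.hasDerivWithinAt_deriv x hx).norm_sq.add
    ((hy.hasDerivWithinAt x hx).norm_sq.const_mul (w ^ 2))).congr_deriv ?_
  have hsplit : ((V x : ℂ) + (w ^ 2 - l)) * y x = (V x - l) * y x + (w ^ 2 : ℝ) • y x := by
    rw [Complex.real_smul]
    push_cast
    ring
  rw [hsplit, inner_add_right, inner_smul_right, real_inner_comm (y' x) (y x)]
  ring

theorem norm_deriv_weightedEnergy_le (hw : 0 < w) (hM : |V x| ≤ M) :
    ‖2 * inner ℝ (y' x) ((V x + ((w : ℂ) ^ 2 - l)) * y x)‖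
      ≤ (‖(w : ℂ) ^ 2 - l‖ + M) / w * weightedEnergy w y y' x := by
  set B := ‖(w : ℂ) ^ 2 - l‖ + M
  have hcoeff : ‖(V x : ℂ) + (w ^ 2 - l)‖ ≤ B := by
    refine (norm_add_le _ _).trans ?_
    rw [Complex.norm_real, Real.norm_eq_abs, add_comm]
    exact add_le_add_right hM _
  have hB : 0 ≤ B := (norm_nonneg _).trans hcoeff
  calc ‖2 * inner ℝ (y' x) ((V x + ((w : ℂ) ^ 2 - l)) * y x)‖
      ≤ 2 * (‖y' x‖ * (B * ‖y x‖)) := by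
        rw [norm_mul, Real.norm_two]
        refine mul_le_mul_of_nonneg_left ((norm_inner_le_norm _ _).trans ?_) zero_le_two
        rw [norm_mul]
        gcongr
    _ = B / w * (2 * ‖y' x‖ * (w * ‖y x‖)) := by field_simp
    _ ≤ B / w * weightedEnergy w y y' x := by
        gcongr
        rw [weightedEnergy, ← mul_pow]
        exact two_mul_le_add_sq _ _

theorem weightedEnergy_le (hy : IsSchrodingerSolution V l y y') (hw : 0 < w)
    (hM : ∀ x ∈ Icc (0 : ℝ) 1, |V x| ≤ M) (ha : a ∈ Icc (0 : ℝ) 1) (hx : x ∈ Icc (0 : ℝ) 1) :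
    weightedEnergy w y y' x
      ≤ weightedEnergy w y y' a * Real.exp ((‖(w : ℂ) ^ 2 - l‖ + M) / w * |x - a|) := by
  have hgronwall := norm_le_norm_mul_exp_of_norm_deriv_le
    (fun s hs ↦ hy.hasDerivWithinAt_weightedEnergy w hs)
    (fun s hs ↦ (norm_deriv_weightedEnergy_le hw (hM s hs)).trans_eq
      (by rw [norm_weightedEnergy])) ha hx
  rwa [norm_weightedEnergy, norm_weightedEnergy] at hgronwall

theorem eq_of_initial_eq (hy : IsSchrodingerSolution V l y y')
    (hv : IsSchrodingerSolution V l v v') (hV : ContinuousOn V (Icc 0 1))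
    (ha : a ∈ Icc (0 : ℝ) 1) (h0 : y a = v a) (h1 : y' a = v' a) (hx : x ∈ Icc (0 : ℝ) 1) :
    y x = v x ∧ y' x = v' x := by
  obtain ⟨M, hM⟩ := isCompact_Icc.exists_bound_of_continuousOn hV
  have henergy := (hy.linearCombination hv 1 (-1)).weightedEnergy_le one_pos hM ha hx
  simp only [weightedEnergy, h0, h1, one_mul, neg_one_mul, add_neg_cancel, norm_zero, one_pow,
    ne_eq, OfNat.ofNat_ne_zero, not_false_eq_true, zero_pow, add_zero, zero_mul] at henergy
  have hzero := (add_eq_zero_iff_of_nonneg (sq_nonneg _) (sq_nonneg _)).1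
    (henergy.antisymm (by positivity))
  simpa only [sq_eq_zero_iff, norm_eq_zero, ← sub_eq_add_neg, sub_eq_zero] using hzero.symm

theorem norm_le_of_initial_zero_one {z : ℂ} (hy : IsSchrodingerSolution V (z ^ 2) y y')
    (hM : ∀ x ∈ Icc (0 : ℝ) 1, |V x| ≤ M) (hz : 1 ≤ ‖z‖) (ha : a ∈ Icc (0 : ℝ) 1)
    (h0 : y a = 0) (h1 : y' a = 1) (hx : x ∈ Icc (0 : ℝ) 1) :
    ‖y x‖ ≤ Real.exp M * Real.exp (|x - a| * |z.im|) / ‖z‖ := by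
  have hz0 : 0 < ‖z‖ := by linarith
  have hM0 : 0 ≤ M := (abs_nonneg _).trans (hM x hx)
  have hrate : (‖(‖z‖ : ℂ) ^ 2 - z ^ 2‖ + M) / ‖z‖ * |x - a| ≤ 2 * (M + |x - a| * |z.im|) := by
    have hxa : |x - a| ≤ 1 := abs_le.2 ⟨by linarith [hx.1, ha.2], by linarith [hx.2, ha.1]⟩
    calc (‖(‖z‖ : ℂ) ^ 2 - z ^ 2‖ + M) / ‖z‖ * |x - a|
        = M / ‖z‖ * |x - a| + 2 * (|x - a| * |z.im|) := by
          rw [norm_ofReal_norm_sq_sub_sq]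
          field_simp
          ring
      _ ≤ M / 1 * 1 + 2 * (|x - a| * |z.im|) := by gcongr
      _ ≤ 2 * (M + |x - a| * |z.im|) := by linarith
  have henergy := hy.weightedEnergy_le hz0 hM ha hx
  simp only [weightedEnergy, h0, h1, norm_zero, norm_one] at henergy
  rw [le_div_iff₀ hz0, ← Real.exp_add]
  refine le_of_sq_le_sq ?_ (Real.exp_pos _).le
  calc (‖y x‖ * ‖z‖) ^ 2 ≤ ‖y' x‖ ^ 2 + ‖z‖ ^ 2 * ‖y x‖ ^ 2 := by nlinarith [sq_nonneg ‖y' x‖]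
    _ ≤ Real.exp ((‖(‖z‖ : ℂ) ^ 2 - z ^ 2‖ + M) / ‖z‖ * |x - a|) := by simpa using henergy
    _ ≤ Real.exp (2 * (M + |x - a| * |z.im|)) := Real.exp_le_exp.2 hrate
    _ = Real.exp (M + |x - a| * |z.im|) ^ 2 := by rw [← Real.exp_nat_mul, Nat.cast_ofNat]

theorem hasDerivWithinAt_variationOfConstants {z : ℂ}
    (hy : IsSchrodingerSolution V (z ^ 2) y y') (hz : z ≠ 0) (x : ℝ) {s : ℝ}
    (hs : s ∈ Icc (0 : ℝ) 1) :
    HasDerivWithinAt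
      (fun s : ℝ ↦ y s * Complex.cos (z * (x - s : ℝ)) + y' s * (Complex.sin (z * (x - s : ℝ)) / z))
      (V s * y s * (Complex.sin (z * (x - s : ℝ)) / z)) (Icc 0 1) s := by
  have hphase : HasDerivAt (fun s : ℝ ↦ z * ((x - s : ℝ) : ℂ)) (z * ((-1 : ℝ) : ℂ)) s :=
    ((hasDerivAt_id s).const_sub x).ofReal_comp.const_mul z
  have hcos := ((Complex.hasDerivAt_cos _).comp s hphase).hasDerivWithinAt (s := Icc 0 1)
  have hsin :=
    (((Complex.hasDerivAt_sin _).comp s hphase).div_const z).hasDerivWithinAt (s := Icc 0 1)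
  refine (((hy.hasDerivWithinAt s hs).mul hcos).add
    ((hy.hasDerivWithinAt_deriv s hs).mul hsin)).congr_deriv ?_
  simp only [Function.comp]
  push_cast
  field_simp
  ring

theorem norm_sub_sin_le_of_initial_zero_one {z : ℂ} (hy : IsSchrodingerSolution V (z ^ 2) y y')
    (hM : ∀ x ∈ Icc (0 : ℝ) 1, |V x| ≤ M) (hz : 1 ≤ ‖z‖) (ha : a ∈ Icc (0 : ℝ) 1)
    (h0 : y a = 0) (h1 : y' a = 1) (hx : x ∈ Icc a 1) :
    ‖y x - Complex.sin (z * (x - a : ℝ)) / z‖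
      ≤ M * Real.exp M * Real.exp ((x - a) * |z.im|) / ‖z‖ ^ 2 := by
  have hsub : Icc a x ⊆ Icc (0 : ℝ) 1 := Icc_subset_Icc ha.1 hx.2
  have hM0 : 0 ≤ M := (abs_nonneg _).trans (hM a ha)
  have hz0 : z ≠ 0 := norm_pos_iff.1 (by linarith)
  have hderiv_le : ∀ s ∈ Icc a x, ‖(V s : ℂ) * y s * (Complex.sin (z * (x - s : ℝ)) / z)‖
      ≤ M * Real.exp M * Real.exp ((x - a) * |z.im|) / ‖z‖ ^ 2 := by
    intro s hs
    have hy_le := hy.norm_le_of_initial_zero_one hM hz ha h0 h1 (hsub hs)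
    have hsin_le := norm_sin_le_exp_abs_im (z * (x - s : ℝ))
    rw [abs_of_nonneg (sub_nonneg.2 hs.1)] at hy_le
    rw [Complex.im_mul_ofReal, abs_mul, abs_of_nonneg (sub_nonneg.2 hs.2)] at hsin_le
    calc ‖(V s : ℂ) * y s * (Complex.sin (z * (x - s : ℝ)) / z)‖
        = |V s| * ‖y s‖ * (‖Complex.sin (z * (x - s : ℝ))‖ / ‖z‖) := by
          rw [norm_mul, norm_mul, norm_div, Complex.norm_real, Real.norm_eq_abs]
      _ ≤ M * (Real.exp M * Real.exp ((s - a) * |z.im|) / ‖z‖)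
            * (Real.exp (|z.im| * (x - s)) / ‖z‖) := by
          gcongr
          exact hM s (hsub hs)
      _ = M * Real.exp M * (Real.exp ((s - a) * |z.im|) * Real.exp (|z.im| * (x - s)))
            / ‖z‖ ^ 2 := by ring
      _ = M * Real.exp M * Real.exp ((x - a) * |z.im|) / ‖z‖ ^ 2 := by
          rw [← Real.exp_add]
          ring_nf
  have hmean := (convex_Icc a x).norm_image_sub_le_of_norm_hasDerivWithin_le
    (fun s hs ↦ (hy.hasDerivWithinAt_variationOfConstants hz0 x (hsub hs)).mono hsub)
    hderiv_le (left_mem_Icc.2 hx.1) (right_mem_Icc.2 hx.1)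
  simp only [sub_self, Complex.ofReal_zero, mul_zero, Complex.cos_zero, mul_one, Complex.sin_zero,
    zero_div, add_zero, h0, h1, zero_mul, zero_add, one_mul] at hmean
  refine hmean.trans (mul_le_of_le_one_right (by positivity) ?_)
  rw [Real.norm_of_nonneg (sub_nonneg.2 hx.1)]
  linarith [ha.1, hx.2]

end IsSchrodingerSolution

section Volterra

theorem isUnit_one_sub_of_norm_pow_lt_one {R : Type*} [NormedRing R] [HasSummableGeomSeries R]
    {a : R} {n : ℕ} (ha : ‖a ^ n‖ < 1) : IsUnit (1 - a) := by
  have hunit := isUnit_one_sub_of_norm_lt_one ha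
  rw [← mul_neg_geom_sum] at hunit
  refine ((Commute.isUnit_mul_iff ?_).1 hunit).1
  exact ((Commute.one_left _).sub_left
    (Commute.sum_right _ _ _ fun i _ ↦ (Commute.refl a).pow_right i))

/-- Extension of a continuous function on `[0, 1]` to `ℝ`, constant outside the interval. -/
noncomputable abbrev unitIntervalExtend (f : C(Icc (0 : ℝ) 1, ℂ)) : C(ℝ, ℂ) :=
  f.IccExtend zero_le_one

theorem differentiable_continuousMap_apply {F : ℂ → C(Icc (0 : ℝ) 1, ℂ)} (hF : Differentiable ℂ F)
    (x : Icc (0 : ℝ) 1) : Differentiable ℂ fun l ↦ F l x := by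
  exact (ContinuousMap.evalCLM ℂ x).differentiable.comp hF

theorem unitIntervalExtend_of_mem (f : C(Icc (0 : ℝ) 1, ℂ)) {x : ℝ} (hx : x ∈ Icc (0 : ℝ) 1) :
    unitIntervalExtend f x = f ⟨x, hx⟩ :=
  IccExtend_of_mem zero_le_one f hx

theorem norm_integral_unitIntervalExtend_le {f : C(Icc (0 : ℝ) 1, ℂ)} {c : ℝ} {n : ℕ}
    {t : Icc (0 : ℝ) 1} (hf : ∀ s, ‖f s‖ ≤ c * |(s - t : ℝ)| ^ n) (x : Icc (0 : ℝ) 1) :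
    ‖∫ s in t..x, unitIntervalExtend f s‖ ≤ c * |(x - t : ℝ)| ^ (n + 1) / (n + 1) := by
  have hbound : ∀ s ∈ uIoc (t : ℝ) x, ‖unitIntervalExtend f s‖ ≤ c * |s - t| ^ n := fun s hs ↦ by
    have hs01 := ordConnected_Icc.uIcc_subset t.2 x.2 (uIoc_subset_uIcc hs)
    rw [unitIntervalExtend_of_mem f hs01]
    exact hf ⟨s, hs01⟩
  have hcont : Continuous fun s : ℝ ↦ c * |s - t| ^ n := by fun_prop
  calc ‖∫ s in t..x, unitIntervalExtend f s‖
      = ‖∫ s in uIoc (t : ℝ) x, unitIntervalExtend f s‖ :=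
        intervalIntegral.norm_integral_eq_norm_integral_uIoc _
    _ ≤ ∫ s in uIoc (t : ℝ) x, c * |s - t| ^ n :=
        norm_integral_le_of_norm_le hcont.integrableOn_uIoc
          ((ae_restrict_iff' measurableSet_uIoc).2 (ae_of_all _ hbound))
    _ = c * |(x - t : ℝ)| ^ (n + 1) / (n + 1) := by
        rw [integral_const_mul, integral_pow_abs_sub_uIoc, mul_div_assoc]

/-- The operator `f ↦ ∫ₜˣ f` on `C([0, 1])`. -/
noncomputable def primitiveFrom (t : Icc (0 : ℝ) 1) :
    C(Icc (0 : ℝ) 1, ℂ) →L[ℂ] C(Icc (0 : ℝ) 1, ℂ) :=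
  LinearMap.mkContinuous
    { toFun := fun f ↦
        ⟨fun x ↦ ∫ s in t..x, unitIntervalExtend f s,
          (intervalIntegral.continuous_primitive
            (fun _ _ ↦ (unitIntervalExtend f).continuous.intervalIntegrable _ _) _).comp
            continuous_subtype_val⟩
      map_add' := fun f g ↦ by
        ext x
        exact intervalIntegral.integral_add
          ((unitIntervalExtend f).continuous.intervalIntegrable _ _)
          ((unitIntervalExtend g).continuous.intervalIntegrable _ _)
      map_smul' := fun c f ↦ by
        ext x
        exact intervalIntegral.integral_smul c _ }
    1 fun f ↦ by
      rw [one_mul]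
      refine (ContinuousMap.norm_le _ (norm_nonneg _)).2 fun x ↦ ?_
      refine (norm_integral_unitIntervalExtend_le (n := 0)
        (fun s ↦ by simpa using f.norm_coe_le_norm s) x).trans ?_
      have hxt : |(x - t : ℝ)| ≤ 1 :=
        abs_le.2 ⟨by linarith [x.2.1, t.2.2], by linarith [x.2.2, t.2.1]⟩
      simpa using mul_le_of_le_one_right (norm_nonneg f) hxt

theorem primitiveFrom_apply (t x : Icc (0 : ℝ) 1) (f : C(Icc (0 : ℝ) 1, ℂ)) :
    primitiveFrom t f x = ∫ s in t..x, unitIntervalExtend f s := rfl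

theorem primitiveFrom_self (t : Icc (0 : ℝ) 1) (f : C(Icc (0 : ℝ) 1, ℂ)) :
    primitiveFrom t f t = 0 := by
  rw [primitiveFrom_apply, intervalIntegral.integral_same]

theorem hasDerivWithinAt_primitiveFrom (t : Icc (0 : ℝ) 1) (f : C(Icc (0 : ℝ) 1, ℂ)) {x : ℝ}
    (hx : x ∈ Icc (0 : ℝ) 1) :
    HasDerivWithinAt (unitIntervalExtend (primitiveFrom t f)) (unitIntervalExtend f x)
      (Icc 0 1) x :=
  ((unitIntervalExtend f).continuous.integral_hasStrictDerivAt (t : ℝ)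
    x).hasDerivAt.hasDerivWithinAt.congr (fun _ hs ↦ unitIntervalExtend_of_mem _ hs)
    (unitIntervalExtend_of_mem _ hx)

/-- The operator `f ↦ ∫ₜˣ ∫ₜˢ q f`, whose fixed point equation `y = y₀ + volterra t q y` with
affine `y₀` encodes the initial value problem for `y'' = q y` at `t`. -/
noncomputable def volterra (t : Icc (0 : ℝ) 1) (q : C(Icc (0 : ℝ) 1, ℂ)) :
    C(Icc (0 : ℝ) 1, ℂ) →L[ℂ] C(Icc (0 : ℝ) 1, ℂ) :=
  primitiveFrom t ∘L primitiveFrom t ∘L ContinuousLinearMap.mul ℂ _ q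

theorem volterra_apply (t : Icc (0 : ℝ) 1) (q f : C(Icc (0 : ℝ) 1, ℂ)) :
    volterra t q f = primitiveFrom t (primitiveFrom t (q * f)) := rfl

theorem norm_volterra_pow_apply_le (t : Icc (0 : ℝ) 1) (q f : C(Icc (0 : ℝ) 1, ℂ)) (n : ℕ)
    (x : Icc (0 : ℝ) 1) :
    ‖(volterra t q ^ n) f x‖ ≤ ‖q‖ ^ n * ‖f‖ / n.factorial * |(x - t : ℝ)| ^ n := by
  induction n generalizing x with
  | zero => simpa using f.norm_coe_le_norm x
  | succ n ih =>
    have hmul : ∀ s, ‖(q * (volterra t q ^ n) f) s‖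
        ≤ ‖q‖ ^ (n + 1) * ‖f‖ / n.factorial * |(s - t : ℝ)| ^ n := fun s ↦ by
      rw [ContinuousMap.mul_apply, norm_mul]
      calc ‖q s‖ * ‖(volterra t q ^ n) f s‖
          ≤ ‖q‖ * (‖q‖ ^ n * ‖f‖ / n.factorial * |(s - t : ℝ)| ^ n) := by
            gcongr
            exacts [q.norm_coe_le_norm s, ih s]
        _ = _ := by ring
    have hinner : ∀ s, ‖primitiveFrom t (q * (volterra t q ^ n) f) s‖
        ≤ ‖q‖ ^ (n + 1) * ‖f‖ / n.factorial * |(s - t : ℝ)| ^ n := fun s ↦ by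
      refine (norm_integral_unitIntervalExtend_le hmul s).trans ?_
      have hst : |(s - t : ℝ)| ≤ 1 :=
        abs_le.2 ⟨by linarith [s.2.1, t.2.2], by linarith [s.2.2, t.2.1]⟩
      refine (div_le_self (by positivity) (by linarith [n.cast_nonneg (α := ℝ)])).trans ?_
      exact mul_le_mul_of_nonneg_left
        (pow_le_pow_of_le_one (abs_nonneg _) hst n.le_succ) (by positivity)
    rw [pow_succ', mul_apply_eq_comp, volterra_apply, primitiveFrom_apply]
    refine (norm_integral_unitIntervalExtend_le hinner x).trans_eq ?_
    rw [Nat.factorial_succ]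
    push_cast
    field_simp

theorem isUnit_one_sub_volterra (t : Icc (0 : ℝ) 1) (q : C(Icc (0 : ℝ) 1, ℂ)) :
    IsUnit (1 - volterra t q) := by
  obtain ⟨n, hn⟩ := ((FloorSemiring.tendsto_pow_div_factorial_atTop ‖q‖).eventually_lt_const
    one_pos).exists
  suffices hpow : ‖volterra t q ^ n‖ ≤ ‖q‖ ^ n / n.factorial from
    isUnit_one_sub_of_norm_pow_lt_one (a := volterra t q) (hpow.trans_lt hn)
  refine ContinuousLinearMap.opNorm_le_bound _ (by positivity) fun f ↦
    (ContinuousMap.norm_le _ (by positivity)).2 fun x ↦ ?_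
  have hxt : |(x - t : ℝ)| ≤ 1 :=
    abs_le.2 ⟨by linarith [x.2.1, t.2.2], by linarith [x.2.2, t.2.1]⟩
  refine (norm_volterra_pow_apply_le t q f n x).trans ?_
  rw [mul_div_right_comm]
  exact mul_le_of_le_one_right (by positivity) (pow_le_one₀ (abs_nonneg _) hxt)

theorem exists_differentiable_eq_add_pencil {E : Type*} [NormedAddCommGroup E] [NormedSpace ℂ E]
    [CompleteSpace E] {A B : E →L[ℂ] E} (hunit : ∀ l : ℂ, IsUnit (1 - (A - l • B))) (y₀ : E) :
    ∃ Y : ℂ → E, Differentiable ℂ Y ∧ ∀ l, Y l = y₀ + (A - l • B) (Y l) := by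
  refine ⟨fun l ↦ Ring.inverse (1 - (A - l • B)) y₀, fun l ↦ ?_, fun l ↦ ?_⟩
  · have hpencil : DifferentiableAt ℂ (fun l : ℂ ↦ 1 - (A - l • B)) l := by fun_prop
    have hinverse : DifferentiableAt ℂ (fun l : ℂ ↦ Ring.inverse (1 - (A - l • B))) l :=
      DifferentiableAt.comp (g := (Ring.inverse : (E →L[ℂ] E) → _)) l
        (differentiableAt_inverse (hunit l)) hpencil
    exact hinverse.clm_apply (differentiableAt_const y₀)
  · exact sub_eq_iff_eq_add.1 (congrArg (· y₀) (Ring.mul_inverse_cancel _ (hunit l)))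

theorem volterra_sub_smul (t : Icc (0 : ℝ) 1) (p q : C(Icc (0 : ℝ) 1, ℂ)) (l : ℂ) :
    volterra t (p - l • q) = volterra t p - l • volterra t q := by
  simp only [volterra, map_sub, map_smul, ContinuousLinearMap.comp_sub,
    ContinuousLinearMap.comp_smul]

theorem exists_differentiable_eq_add_volterra (t : Icc (0 : ℝ) 1) (p q : C(Icc (0 : ℝ) 1, ℂ))
    (y₀ : C(Icc (0 : ℝ) 1, ℂ)) : ∃ Y : ℂ → C(Icc (0 : ℝ) 1, ℂ), Differentiable ℂ Y ∧
      ∀ l, Y l = y₀ + volterra t (p - l • q) (Y l) := by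
  simp only [volterra_sub_smul]
  refine exists_differentiable_eq_add_pencil (fun l ↦ ?_) y₀
  rw [← volterra_sub_smul]
  exact isUnit_one_sub_volterra t _

end Volterra

/-- `Y l` solves `-y'' + V y = l y` on `[0, 1]` with derivative `Y' l` and initial data
`y(t) = α`, `y'(t) = β`, and depends on `l` as an entire function. -/
structure IsEntireSolution (V : ℝ → ℝ) (t : ℝ) (α β : ℂ) (Y Y' : ℂ → ℝ → ℂ) : Prop where
  isSchrodingerSolution : ∀ l, IsSchrodingerSolution V l (Y l) (Y' l)
  initial : ∀ l, Y l t = α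
  initial_deriv : ∀ l, Y' l t = β
  differentiable : ∀ x ∈ Icc (0 : ℝ) 1, Differentiable ℂ fun l ↦ Y l x
  differentiable_deriv : ∀ x ∈ Icc (0 : ℝ) 1, Differentiable ℂ fun l ↦ Y' l x
  differentiable_integral : ∀ h : ℝ → ℂ, ContinuousOn h (Icc 0 1) →
    ∀ a ∈ Icc (0 : ℝ) 1, ∀ x ∈ Icc (0 : ℝ) 1, Differentiable ℂ fun l ↦ ∫ s in a..x, h s * Y l s

theorem isSchrodingerSolution_of_eq_add_volterra {V : ℝ → ℝ} {l : ℂ} (t : Icc (0 : ℝ) 1)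
    {q y₀ Y : C(Icc (0 : ℝ) 1, ℂ)} (hq : ∀ x, q x = V x - l) {β : ℂ}
    (hy₀ : ∀ x ∈ Icc (0 : ℝ) 1, HasDerivWithinAt (unitIntervalExtend y₀) β (Icc 0 1) x)
    (hY : Y = y₀ + volterra t q Y) :
    IsSchrodingerSolution V l (unitIntervalExtend Y)
      (fun x ↦ β + unitIntervalExtend (primitiveFrom t (q * Y)) x) where
  hasDerivWithinAt x hx := by
    have hsum := (hy₀ x hx).add (hasDerivWithinAt_primitiveFrom t (primitiveFrom t (q * Y)) hx)
    have hfun : ⇑(unitIntervalExtend Y) = unitIntervalExtend y₀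
        + unitIntervalExtend (primitiveFrom t (primitiveFrom t (q * Y))) := by
      conv_lhs => rw [hY, volterra_apply]
      rfl
    rwa [hfun]
  hasDerivWithinAt_deriv x hx := by
    refine ((hasDerivWithinAt_primitiveFrom t (q * Y) hx).const_add β).congr_deriv ?_
    rw [unitIntervalExtend_of_mem _ hx, unitIntervalExtend_of_mem _ hx, ContinuousMap.mul_apply, hq]

theorem differentiable_integral_unitIntervalExtend {Y : ℂ → C(Icc (0 : ℝ) 1, ℂ)}
    (hY : Differentiable ℂ Y) {h : ℝ → ℂ} (hh : ContinuousOn h (Icc 0 1)) {a x : ℝ}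
    (ha : a ∈ Icc (0 : ℝ) 1) (hx : x ∈ Icc (0 : ℝ) 1) :
    Differentiable ℂ fun l ↦ ∫ s in a..x, h s * unitIntervalExtend (Y l) s := by
  let H : C(Icc (0 : ℝ) 1, ℂ) := ⟨fun s ↦ h s, continuousOn_iff_continuous_domRestrict.1 hh⟩
  have hdiff : Differentiable ℂ fun l ↦ primitiveFrom ⟨a, ha⟩ (H * Y l) ⟨x, hx⟩ :=
    differentiable_continuousMap_apply
      ((primitiveFrom ⟨a, ha⟩).differentiable.comp (hY.const_mul H)) _
  convert hdiff using 2 with l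
  rw [primitiveFrom_apply]
  refine intervalIntegral.integral_congr fun s hs ↦ ?_
  have hs01 := ordConnected_Icc.uIcc_subset ha hx hs
  simp only [unitIntervalExtend_of_mem _ hs01]
  rfl

theorem exists_isEntireSolution {V : ℝ → ℝ} (hV : ContinuousOn V (Icc 0 1)) {t : ℝ}
    (ht : t ∈ Icc (0 : ℝ) 1) (α β : ℂ) : ∃ Y Y', IsEntireSolution V t α β Y Y' := by
  let q : ℂ → C(Icc (0 : ℝ) 1, ℂ) := fun l ↦
    ⟨fun x ↦ (V x : ℂ),
      Complex.continuous_ofReal.comp (continuousOn_iff_continuous_domRestrict.1 hV)⟩ - l • 1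
  let y₀ : C(Icc (0 : ℝ) 1, ℂ) := ⟨fun x ↦ α + β * ((x - t : ℝ) : ℂ), by fun_prop⟩
  have hq : Differentiable ℂ q := by fun_prop
  have hy₀ : ∀ x ∈ Icc (0 : ℝ) 1, HasDerivWithinAt (unitIntervalExtend y₀) β (Icc 0 1) x := by
    intro x hx
    have haffine : HasDerivAt (fun x : ℝ ↦ α + β * ((x - t : ℝ) : ℂ)) β x := by
      simpa using ((((hasDerivAt_id x).sub_const t).ofReal_comp).const_mul β).const_add α
    exact haffine.hasDerivWithinAt.congr (fun s hs ↦ unitIntervalExtend_of_mem y₀ hs)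
      (unitIntervalExtend_of_mem y₀ hx)
  obtain ⟨Y, hY, hYeq⟩ := exists_differentiable_eq_add_volterra ⟨t, ht⟩ _ 1 y₀
  have heval : ∀ {F : ℂ → C(Icc (0 : ℝ) 1, ℂ)}, Differentiable ℂ F → ∀ {x : ℝ},
      x ∈ Icc (0 : ℝ) 1 → Differentiable ℂ fun l ↦ unitIntervalExtend (F l) x := fun hF x hx ↦ by
    simp only [unitIntervalExtend_of_mem _ hx]
    exact differentiable_continuousMap_apply hF _
  refine ⟨fun l ↦ unitIntervalExtend (Y l),
    fun l x ↦ β + unitIntervalExtend (primitiveFrom ⟨t, ht⟩ (q l * Y l)) x, ?_, fun l ↦ ?_,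
    fun l ↦ ?_, fun x hx ↦ heval hY hx, fun x hx ↦ ?_,
    fun h hh a ha x hx ↦ differentiable_integral_unitIntervalExtend hY hh ha hx⟩
  · exact fun l ↦ isSchrodingerSolution_of_eq_add_volterra _ (fun x ↦ by simp [q]) hy₀ (hYeq l)
  · rw [unitIntervalExtend_of_mem _ ht, hYeq, ContinuousMap.add_apply, volterra_apply,
      primitiveFrom_self]
    simp [y₀]
  · rw [unitIntervalExtend_of_mem _ ht, primitiveFrom_self, add_zero]
  · exact (heval ((primitiveFrom _).differentiable.comp (hq.mul hY)) hx).const_add β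

section CauchySolutions

/-- The solutions of `-y'' + V y = l y` with `y(t) = α`, `y'(t) = β`, and their derivatives, as
functions of `l` and `x`; meaningful for `V` continuous on `[0, 1]` and `t ∈ [0, 1]`. -/
noncomputable def cauchySolution (V : ℝ → ℝ) (t : ℝ) (α β : ℂ) : (ℂ → ℝ → ℂ) × (ℂ → ℝ → ℂ) :=
  Classical.epsilon fun Y ↦ IsEntireSolution V t α β Y.1 Y.2

/-- The solution with `y(t) = 0`, `y'(t) = 1`, the analogue of `sin (√l (x - t)) / √l`. -/
noncomputable def sineSolution (V : ℝ → ℝ) (t : ℝ) : ℂ → ℝ → ℂ := (cauchySolution V t 0 1).1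

/-- The derivative in `x` of `sineSolution V t`. -/
noncomputable def sineSolutionDeriv (V : ℝ → ℝ) (t : ℝ) : ℂ → ℝ → ℂ := (cauchySolution V t 0 1).2

/-- The solution with `y(t) = 1`, `y'(t) = 0`, the analogue of `cos (√l (x - t))`. -/
noncomputable def cosineSolution (V : ℝ → ℝ) (t : ℝ) : ℂ → ℝ → ℂ := (cauchySolution V t 1 0).1

/-- The derivative in `x` of `cosineSolution V t`. -/
noncomputable def cosineSolutionDeriv (V : ℝ → ℝ) (t : ℝ) : ℂ → ℝ → ℂ :=
  (cauchySolution V t 1 0).2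

variable {V : ℝ → ℝ} {l : ℂ} {y y' : ℝ → ℂ} {s t x : ℝ}

theorem isEntireSolution_cauchySolution (hV : ContinuousOn V (Icc 0 1)) (ht : t ∈ Icc (0 : ℝ) 1)
    (α β : ℂ) :
    IsEntireSolution V t α β (cauchySolution V t α β).1 (cauchySolution V t α β).2 := by
  obtain ⟨Y, Y', hY⟩ := exists_isEntireSolution hV ht α β
  exact Classical.epsilon_spec (p := fun Y : (ℂ → ℝ → ℂ) × (ℂ → ℝ → ℂ) ↦
    IsEntireSolution V t α β Y.1 Y.2) ⟨(Y, Y'), hY⟩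

theorem isEntireSolution_sineSolution (hV : ContinuousOn V (Icc 0 1)) (ht : t ∈ Icc (0 : ℝ) 1) :
    IsEntireSolution V t 0 1 (sineSolution V t) (sineSolutionDeriv V t) :=
  isEntireSolution_cauchySolution hV ht 0 1

theorem isEntireSolution_cosineSolution (hV : ContinuousOn V (Icc 0 1))
    (ht : t ∈ Icc (0 : ℝ) 1) :
    IsEntireSolution V t 1 0 (cosineSolution V t) (cosineSolutionDeriv V t) :=
  isEntireSolution_cauchySolution hV ht 1 0

theorem isSchrodingerSolution_sineSolution (hV : ContinuousOn V (Icc 0 1))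
    (ht : t ∈ Icc (0 : ℝ) 1) (l : ℂ) :
    IsSchrodingerSolution V l (sineSolution V t l) (sineSolutionDeriv V t l) :=
  (isEntireSolution_sineSolution hV ht).isSchrodingerSolution l

theorem sineSolution_self (hV : ContinuousOn V (Icc 0 1)) (ht : t ∈ Icc (0 : ℝ) 1) (l : ℂ) :
    sineSolution V t l t = 0 :=
  (isEntireSolution_sineSolution hV ht).initial l

theorem sineSolutionDeriv_self (hV : ContinuousOn V (Icc 0 1)) (ht : t ∈ Icc (0 : ℝ) 1) (l : ℂ) :
    sineSolutionDeriv V t l t = 1 :=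
  (isEntireSolution_sineSolution hV ht).initial_deriv l

theorem differentiable_sineSolution (hV : ContinuousOn V (Icc 0 1)) (ht : t ∈ Icc (0 : ℝ) 1)
    (hx : x ∈ Icc (0 : ℝ) 1) : Differentiable ℂ fun l ↦ sineSolution V t l x :=
  (isEntireSolution_sineSolution hV ht).differentiable x hx

theorem IsSchrodingerSolution.eq_cosineSolution_add_sineSolution
    (hy : IsSchrodingerSolution V l y y') (hV : ContinuousOn V (Icc 0 1))
    (ht : t ∈ Icc (0 : ℝ) 1) (hx : x ∈ Icc (0 : ℝ) 1) :
    y x = y t * cosineSolution V t l x + y' t * sineSolution V t l x ∧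
      y' x = y t * cosineSolutionDeriv V t l x + y' t * sineSolutionDeriv V t l x := by
  have hC := isEntireSolution_cosineSolution hV ht
  have hS := isEntireSolution_sineSolution hV ht
  refine hy.eq_of_initial_eq ((hC.isSchrodingerSolution l).linearCombination
    (hS.isSchrodingerSolution l) (y t) (y' t)) hV ht ?_ ?_ hx
  · rw [hC.initial, hS.initial, mul_one, mul_zero, add_zero]
  · rw [hC.initial_deriv, hS.initial_deriv, mul_one, mul_zero, zero_add]

theorem wronskian_cosineSolution_sineSolution (hV : ContinuousOn V (Icc 0 1))
    (ht : t ∈ Icc (0 : ℝ) 1) (hx : x ∈ Icc (0 : ℝ) 1) (l : ℂ) :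
    cosineSolution V t l x * sineSolutionDeriv V t l x
      - cosineSolutionDeriv V t l x * sineSolution V t l x = 1 := by
  have hC := isEntireSolution_cosineSolution hV ht
  have hS := isEntireSolution_sineSolution hV ht
  rw [(hC.isSchrodingerSolution l).wronskian_eq_wronskian (hS.isSchrodingerSolution l) ht hx,
    hC.initial, hC.initial_deriv, hS.initial, hS.initial_deriv]
  norm_num

theorem sineSolution_eq (hV : ContinuousOn V (Icc 0 1)) (ht : t ∈ Icc (0 : ℝ) 1)
    (hs : s ∈ Icc (0 : ℝ) 1) (hx : x ∈ Icc (0 : ℝ) 1) (l : ℂ) :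
    sineSolution V s l x = cosineSolution V t l s * sineSolution V t l x
      - sineSolution V t l s * cosineSolution V t l x := by
  have hcomb := (isSchrodingerSolution_sineSolution hV ht l).linearCombination
    ((isEntireSolution_cosineSolution hV ht).isSchrodingerSolution l)
    (cosineSolution V t l s) (-sineSolution V t l s)
  rw [((isSchrodingerSolution_sineSolution hV hs l).eq_of_initial_eq hcomb hV hs ?_ ?_ hx).1]
  · ring
  · rw [sineSolution_self hV hs]
    ring
  · rw [sineSolutionDeriv_self hV hs, ← wronskian_cosineSolution_sineSolution hV ht hs l]
    ring

theorem sineSolution_swap (hV : ContinuousOn V (Icc 0 1)) (ht : t ∈ Icc (0 : ℝ) 1)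
    (hx : x ∈ Icc (0 : ℝ) 1) (l : ℂ) : sineSolution V t l x = -sineSolution V x l t := by
  rw [sineSolution_eq hV ht hx ht, sineSolution_self hV ht,
    (isEntireSolution_cosineSolution hV ht).initial]
  ring

theorem sineSolution_plucker {r : ℝ} (hV : ContinuousOn V (Icc 0 1)) (hr : r ∈ Icc (0 : ℝ) 1)
    (hs : s ∈ Icc (0 : ℝ) 1) (ht : t ∈ Icc (0 : ℝ) 1) (hx : x ∈ Icc (0 : ℝ) 1) (l : ℂ) :
    sineSolution V r l s * sineSolution V t l x
      = sineSolution V r l t * sineSolution V s l x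
        - sineSolution V r l x * sineSolution V s l t := by
  rw [sineSolution_eq hV hr ht hx, sineSolution_eq hV hr hs hx, sineSolution_eq hV hr hs ht]
  ring

end CauchySolutions

section SineGrowth

variable {V : ℝ → ℝ} {t x : ℝ}

theorem hasExpUpperBound_sineSolution (hV : ContinuousOn V (Icc 0 1)) (ht : t ∈ Icc (0 : ℝ) 1)
    (hx : x ∈ Icc (0 : ℝ) 1) : HasExpUpperBound |x - t| 1 fun l ↦ sineSolution V t l x := by
  obtain ⟨M, hM⟩ := isCompact_Icc.exists_bound_of_continuousOn hV
  refine ⟨Real.exp M, (Real.exp_pos M).le, fun z hz ↦ ?_⟩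
  rw [pow_one]
  exact (isSchrodingerSolution_sineSolution hV ht _).norm_le_of_initial_zero_one hM hz ht
    (sineSolution_self hV ht _) (sineSolutionDeriv_self hV ht _) hx

theorem hasExpLowerBound_sineSolution (hV : ContinuousOn V (Icc 0 1)) (ht : 0 ≤ t) (htx : t < x)
    (hx : x ≤ 1) :
    HasExpLowerBound (sineRadius (x - t)) (x - t) 1 fun l ↦ sineSolution V t l x := by
  obtain ⟨M, hM⟩ := isCompact_Icc.exists_bound_of_continuousOn hV
  have ht01 : t ∈ Icc (0 : ℝ) 1 := ⟨ht, htx.le.trans hx⟩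
  have hL : 0 < x - t := sub_pos.2 htx
  refine ⟨1 / 8, by norm_num, ?_⟩
  filter_upwards [(tendsto_sineRadius hL).eventually_ge_atTop (max 1 (8 * (M * Real.exp M)))]
    with n hn z hz
  have hzn := hn.trans (le_norm_of_mem_squareContour hz)
  have hz1 : 1 ≤ ‖z‖ := (le_max_left _ _).trans hzn
  have hzM : 8 * (M * Real.exp M) ≤ ‖z‖ := (le_max_right _ _).trans hzn
  have hE0 := Real.exp_pos ((x - t) * |z.im|)
  set E := Real.exp ((x - t) * |z.im|) with hE
  have hsin : E / 4 / ‖z‖ ≤ ‖Complex.sin (z * (x - t : ℝ)) / z‖ := by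
    rw [norm_div, hE, mul_comm (x - t)]
    gcongr
    exact exp_le_norm_sin_of_mem_squareContour hL hz
  have hdiff : ‖sineSolution V t (z ^ 2) x - Complex.sin (z * (x - t : ℝ)) / z‖
      ≤ E / 8 / ‖z‖ := by
    refine ((isSchrodingerSolution_sineSolution hV ht01 _).norm_sub_sin_le_of_initial_zero_one hM
      hz1 ht01 (sineSolution_self hV ht01 _) (sineSolutionDeriv_self hV ht01 _)
      ⟨htx.le, hx⟩).trans ?_
    rw [pow_two, ← div_div]
    refine div_le_div_of_nonneg_right ?_ (norm_nonneg z)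
    rw [div_le_iff₀ (by linarith)]
    nlinarith
  calc 1 / 8 * E / ‖z‖ ^ 1 = E / 4 / ‖z‖ - E / 8 / ‖z‖ := by ring
    _ ≤ ‖Complex.sin (z * (x - t : ℝ)) / z‖
        - ‖sineSolution V t (z ^ 2) x - Complex.sin (z * (x - t : ℝ)) / z‖ :=
      sub_le_sub hsin hdiff
    _ ≤ ‖sineSolution V t (z ^ 2) x‖ := by
      rw [sub_le_iff_le_add, norm_sub_rev]
      exact norm_le_norm_add_norm_sub' _ _

theorem hasExpUpperBound_integral_mul_sineSolution (hV : ContinuousOn V (Icc 0 1))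
    (ht : t ∈ Icc (0 : ℝ) 1) {h : ℝ → ℂ} (hh : ContinuousOn h (Icc 0 1)) {p q κ : ℝ}
    (hp : p ∈ Icc (0 : ℝ) 1) (hq : q ∈ Icc (0 : ℝ) 1)
    (hsupp : ∀ s ∈ uIcc p q, h s ≠ 0 → |s - t| ≤ κ) :
    HasExpUpperBound κ 1 fun l ↦ ∫ s in p..q, h s * sineSolution V t l s := by
  obtain ⟨M, hM⟩ := isCompact_Icc.exists_bound_of_continuousOn hV
  obtain ⟨H, hH⟩ := isCompact_Icc.exists_bound_of_continuousOn hh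
  have hH0 : 0 ≤ H := (norm_nonneg _).trans (hH t ht)
  refine ⟨H * Real.exp M, by positivity, fun z hz ↦ ?_⟩
  have hintegrand : ∀ s ∈ uIoc p q, ‖h s * sineSolution V t (z ^ 2) s‖
      ≤ H * Real.exp M * Real.exp (κ * |z.im|) / ‖z‖ ^ 1 := fun s hs ↦ by
    have hs01 := ordConnected_Icc.uIcc_subset hp hq (uIoc_subset_uIcc hs)
    by_cases hs0 : h s = 0
    · rw [hs0, zero_mul, norm_zero]
      positivity
    · have hsine := (isSchrodingerSolution_sineSolution hV ht (z ^ 2)).norm_le_of_initial_zero_one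
        hM hz ht (sineSolution_self hV ht _) (sineSolutionDeriv_self hV ht _) hs01
      calc ‖h s * sineSolution V t (z ^ 2) s‖
          ≤ H * (Real.exp M * Real.exp (|s - t| * |z.im|) / ‖z‖) :=
            norm_mul_le_of_le (hH s hs01) hsine
        _ ≤ H * (Real.exp M * Real.exp (κ * |z.im|) / ‖z‖) := by
            gcongr
            exact hsupp s (uIoc_subset_uIcc hs) hs0
        _ = H * Real.exp M * Real.exp (κ * |z.im|) / ‖z‖ ^ 1 := by ring
  refine (intervalIntegral.norm_integral_le_of_norm_le_const hintegrand).trans ?_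
  refine mul_le_of_le_one_right (by positivity) (abs_le.2 ⟨?_, ?_⟩) <;>
    linarith [hp.1, hp.2, hq.1, hq.2]

end SineGrowth

section Completeness

variable {V : ℝ → ℝ} {h : ℝ → ℂ} {l : ℂ} {x : ℝ}

theorem eq_zero_of_hasDerivAt_of_eq_zero_on {𝕜 E : Type*} [NontriviallyNormedField 𝕜]
    [NormedAddCommGroup E] [NormedSpace 𝕜 E] {f : 𝕜 → E} {f' : E} {u : Set 𝕜} {x : 𝕜}
    (hf : HasDerivAt f f' x) (hu : IsOpen u) (hx : x ∈ u) (hzero : ∀ y ∈ u, f y = 0) : f' = 0 :=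
  hf.unique <| (hasDerivAt_const x 0).congr_of_eventuallyEq <|
    eventually_of_mem (hu.mem_nhds hx) hzero

theorem sineSolution_mul_integral_eq (hV : ContinuousOn V (Icc 0 1))
    (hh : ContinuousOn h (Icc 0 1)) (hx : x ∈ Icc (0 : ℝ) 1) (l : ℂ)
    (horth : ∫ s in (0 : ℝ)..1, h s * sineSolution V 0 l s = 0) :
    (∫ s in x..1, h s * sineSolution V x l s) * sineSolution V 0 l 1
      = sineSolution V 0 l x * (∫ s in x..1, h s * sineSolution V 1 l s)
        - sineSolution V x l 1 * ∫ s in (0 : ℝ)..x, h s * sineSolution V 0 l s := by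
  have h0 : (0 : ℝ) ∈ Icc (0 : ℝ) 1 := unitInterval.zero_mem
  have h1 : (1 : ℝ) ∈ Icc (0 : ℝ) 1 := unitInterval.one_mem
  have hint : ∀ {t p q : ℝ}, t ∈ Icc (0 : ℝ) 1 → p ∈ Icc (0 : ℝ) 1 → q ∈ Icc (0 : ℝ) 1 →
      IntervalIntegrable (fun s ↦ h s * sineSolution V t l s) volume p q := fun ht hp hq ↦
    intervalIntegrable_of_mem_Icc
      (hh.mul (isSchrodingerSolution_sineSolution hV ht l).continuousOn) hp hq
  have hsplit : ∫ s in (0 : ℝ)..x, h s * sineSolution V 0 l s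
      = -∫ s in x..1, h s * sineSolution V 0 l s := by
    rw [eq_neg_iff_add_eq_zero, ← horth]
    exact intervalIntegral.integral_add_adjacent_intervals (hint h0 h0 hx) (hint h0 hx h1)
  rw [hsplit, mul_neg, sub_neg_eq_add, ← intervalIntegral.integral_mul_const,
    ← intervalIntegral.integral_const_mul, ← intervalIntegral.integral_const_mul,
    ← intervalIntegral.integral_add ((hint h1 hx h1).const_mul _) ((hint h0 hx h1).const_mul _)]
  refine intervalIntegral.integral_congr fun s hs ↦ ?_
  have hs01 := ordConnected_Icc.uIcc_subset hx h1 hs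
  linear_combination h s * sineSolution_plucker hV h0 h1 hx hs01 l
    - h s * sineSolution V 0 l s * sineSolution_swap hV hx h1 l

theorem integral_mul_sineSolution_eq_zero (hV : ContinuousOn V (Icc 0 1))
    (hh : ContinuousOn h (Icc 0 1)) (hx : x ∈ Ioo (0 : ℝ) 1)
    (horth : ∀ l, ∫ s in (0 : ℝ)..1, h s * sineSolution V 0 l s = 0) (l : ℂ) :
    ∫ s in x..1, h s * sineSolution V x l s = 0 := by
  have h0 : (0 : ℝ) ∈ Icc (0 : ℝ) 1 := unitInterval.zero_mem
  have h1 : (1 : ℝ) ∈ Icc (0 : ℝ) 1 := unitInterval.one_mem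
  have hx01 := Ioo_subset_Icc_self hx
  have habs : |1 - x| = 1 - x := abs_of_pos (sub_pos.2 hx.2)
  have hright := hasExpUpperBound_integral_mul_sineSolution hV h1 hh hx01 h1 (κ := 1 - x)
    fun s hs _ ↦ by
      rw [uIcc_of_le hx.2.le] at hs
      rw [abs_of_nonpos (sub_nonpos.2 hs.2)]
      linarith [hs.1]
  have hleft := hasExpUpperBound_integral_mul_sineSolution hV h0 hh h0 hx01 (κ := x)
    fun s hs _ ↦ by
      rw [uIcc_of_le hx.1.le] at hs
      rw [sub_zero, abs_of_nonneg hs.1]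
      exact hs.2
  have hupper := ((hasExpUpperBound_sineSolution hV h0 hx01).mul hright).sub
    (((hasExpUpperBound_sineSolution hV hx01 h1).mul hleft).mono (κ' := |x - 0| + (1 - x))
      (by rw [habs, sub_zero, abs_of_pos hx.1, add_comm]) le_rfl)
  have hdiff := (isEntireSolution_sineSolution hV hx01).differentiable_integral h hh x hx01 1 h1
  have hlower := hasExpLowerBound_sineSolution hV le_rfl zero_lt_one le_rfl
  simp only [← sineSolution_mul_integral_eq hV hh hx01 _ (horth _)] at hupper
  exact congrFun (eq_zero_of_growth_mul hdiff (tendsto_sineRadius (sub_pos.2 zero_lt_one)) hlower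
    hupper (by rw [sub_zero, abs_of_pos hx.1]; linarith) one_le_two (Or.inr one_lt_two)) l

theorem hasDerivAt_integral_tail {f : ℝ → ℂ} (hf : ContinuousOn f (Icc 0 1))
    (hx : x ∈ Ioo (0 : ℝ) 1) : HasDerivAt (fun x ↦ ∫ s in x..1, f s) (-f x) x :=
  intervalIntegral.integral_hasDerivAt_left
    (intervalIntegrable_of_mem_Icc hf (Ioo_subset_Icc_self hx) unitInterval.one_mem)
    ((hf.mono Ioo_subset_Icc_self).stronglyMeasurableAtFilter isOpen_Ioo x hx)
    (hf.continuousAt (Icc_mem_nhds hx.1 hx.2))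

theorem integral_mul_sineSolution_tail_eq (hV : ContinuousOn V (Icc 0 1))
    (hh : ContinuousOn h (Icc 0 1)) (hx : x ∈ Icc (0 : ℝ) 1) (l : ℂ) :
    ∫ s in x..1, h s * sineSolution V x l s
      = cosineSolution V 0 l x * (∫ s in x..1, h s * sineSolution V 0 l s)
        - sineSolution V 0 l x * ∫ s in x..1, h s * cosineSolution V 0 l s := by
  have h0 : (0 : ℝ) ∈ Icc (0 : ℝ) 1 := unitInterval.zero_mem
  have h1 : (1 : ℝ) ∈ Icc (0 : ℝ) 1 := unitInterval.one_mem
  have hC := (isEntireSolution_cosineSolution hV h0).isSchrodingerSolution l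
  have hS := isSchrodingerSolution_sineSolution hV h0 l
  have hintC := intervalIntegrable_of_mem_Icc (hh.fun_mul hC.continuousOn) hx h1
  have hintS := intervalIntegrable_of_mem_Icc (hh.fun_mul hS.continuousOn) hx h1
  rw [← intervalIntegral.integral_const_mul, ← intervalIntegral.integral_const_mul,
    ← intervalIntegral.integral_sub (hintS.const_mul _) (hintC.const_mul _)]
  refine intervalIntegral.integral_congr fun s hs ↦ ?_
  linear_combination h s * sineSolution_eq hV h0 hx (ordConnected_Icc.uIcc_subset hx h1 hs) l

theorem eq_zero_of_integral_mul_sineSolution_tail_eq_zero (hV : ContinuousOn V (Icc 0 1))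
    (hh : ContinuousOn h (Icc 0 1))
    (htail : ∀ x ∈ Ioo (0 : ℝ) 1, ∫ s in x..1, h s * sineSolution V x l s = 0)
    (hx : x ∈ Ioo (0 : ℝ) 1) : h x = 0 := by
  have h0 : (0 : ℝ) ∈ Icc (0 : ℝ) 1 := unitInterval.zero_mem
  have hC := (isEntireSolution_cosineSolution hV h0).isSchrodingerSolution l
  have hS := isSchrodingerSolution_sineSolution hV h0 l
  have hcontC := hh.fun_mul hC.continuousOn
  have hcontS := hh.fun_mul hS.continuousOn
  have hwronskian := fun x hx ↦
    wronskian_cosineSolution_sineSolution hV h0 (x := x) (Ioo_subset_Icc_self hx) l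
  set P : ℝ → ℂ := fun x ↦ ∫ s in x..1, h s * cosineSolution V 0 l s
  set Q : ℝ → ℂ := fun x ↦ ∫ s in x..1, h s * sineSolution V 0 l s
  have hexpand : ∀ x ∈ Ioo (0 : ℝ) 1,
      cosineSolution V 0 l x * Q x - sineSolution V 0 l x * P x = 0 := fun x hx ↦ by
    rw [← integral_mul_sineSolution_tail_eq hV hh (Ioo_subset_Icc_self hx), htail x hx]
  have hexpand_deriv : ∀ x ∈ Ioo (0 : ℝ) 1,
      cosineSolutionDeriv V 0 l x * Q x - sineSolutionDeriv V 0 l x * P x = 0 := fun x hx ↦ by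
    have hderiv := eq_zero_of_hasDerivAt_of_eq_zero_on
      (((hC.hasDerivAt hx).mul (hasDerivAt_integral_tail hcontS hx)).sub
        ((hS.hasDerivAt hx).mul (hasDerivAt_integral_tail hcontC hx))) isOpen_Ioo hx hexpand
    linear_combination hderiv
  have hP : ∀ x ∈ Ioo (0 : ℝ) 1, P x = 0 := fun x hx ↦ by
    linear_combination (-P x) * hwronskian x hx + cosineSolutionDeriv V 0 l x * hexpand x hx
      - cosineSolution V 0 l x * hexpand_deriv x hx
  have hQ : ∀ x ∈ Ioo (0 : ℝ) 1, Q x = 0 := fun x hx ↦ by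
    linear_combination (-Q x) * hwronskian x hx + sineSolutionDeriv V 0 l x * hexpand x hx
      - sineSolution V 0 l x * hexpand_deriv x hx
  have hhC := eq_zero_of_hasDerivAt_of_eq_zero_on (hasDerivAt_integral_tail hcontC hx)
    isOpen_Ioo hx hP
  have hhS := eq_zero_of_hasDerivAt_of_eq_zero_on (hasDerivAt_integral_tail hcontS hx)
    isOpen_Ioo hx hQ
  linear_combination (-h x) * hwronskian x hx - sineSolutionDeriv V 0 l x * hhC
    + cosineSolutionDeriv V 0 l x * hhS

theorem eq_zero_of_integral_mul_sineSolution_eq_zero (hV : ContinuousOn V (Icc 0 1))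
    (hh : ContinuousOn h (Icc 0 1))
    (horth : ∀ l, ∫ s in (0 : ℝ)..1, h s * sineSolution V 0 l s = 0) (hx : x ∈ Icc (0 : ℝ) 1) :
    h x = 0 := by
  refine EqOn.of_subset_closure (s := Ioo 0 1) (g := fun _ ↦ 0) (fun x hx ↦ ?_) hh
    continuousOn_const Ioo_subset_Icc_self (closure_Ioo zero_ne_one).ge hx
  exact eq_zero_of_integral_mul_sineSolution_tail_eq_zero (l := 0) hV hh
    (fun x hx ↦ integral_mul_sineSolution_eq_zero hV hh hx horth 0) hx

end Completeness

section DirichletEigenvalues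

variable {V : ℝ → ℝ} {l : ℂ} {μ : ℝ}

theorem contDiffOn_succ_of_hasDerivWithinAt {𝕜 F : Type*} [NontriviallyNormedField 𝕜]
    [NormedAddCommGroup F] [NormedSpace 𝕜 F] {f f' : 𝕜 → F} {s : Set 𝕜} (hs : UniqueDiffOn 𝕜 s)
    {n : ℕ} (hf : ∀ x ∈ s, HasDerivWithinAt f (f' x) s x) (hf' : ContDiffOn 𝕜 n f' s) :
    ContDiffOn 𝕜 (n + 1) f s :=
  (contDiffOn_succ_iff_derivWithin hs).2
    ⟨fun x hx ↦ (hf x hx).differentiableWithinAt, fun h ↦ absurd h (by simp),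
      hf'.congr fun x hx ↦ (hf x hx).derivWithin (hs x hx)⟩

theorem sineSolution_conj (hV : ContinuousOn V (Icc 0 1)) (l : ℂ) {x : ℝ}
    (hx : x ∈ Icc (0 : ℝ) 1) :
    sineSolution V 0 (starRingEnd ℂ l) x = starRingEnd ℂ (sineSolution V 0 l x) := by
  have h0 : (0 : ℝ) ∈ Icc (0 : ℝ) 1 := unitInterval.zero_mem
  refine ((isSchrodingerSolution_sineSolution hV h0 _).eq_of_initial_eq
    (isSchrodingerSolution_sineSolution hV h0 l).conj hV h0 ?_ ?_ hx).1
  · rw [sineSolution_self hV h0, sineSolution_self hV h0, map_zero]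
  · rw [sineSolutionDeriv_self hV h0, sineSolutionDeriv_self hV h0, map_one]

theorem ofReal_re_sineSolution (hV : ContinuousOn V (Icc 0 1)) (μ : ℝ) {x : ℝ}
    (hx : x ∈ Icc (0 : ℝ) 1) : ((sineSolution V 0 μ x).re : ℂ) = sineSolution V 0 μ x := by
  rw [← Complex.conj_eq_iff_re, ← sineSolution_conj hV μ hx, Complex.conj_ofReal]

theorem exists_sineSolution_ne_zero (hV : ContinuousOn V (Icc 0 1)) (l : ℂ) :
    ∃ x ∈ Icc (0 : ℝ) 1, sineSolution V 0 l x ≠ 0 := by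
  by_contra! hzero
  have h0 : (0 : ℝ) ∈ Icc (0 : ℝ) 1 := unitInterval.zero_mem
  have hderiv := (isSchrodingerSolution_sineSolution hV h0 l).hasDerivWithinAt 0 h0
  have hderiv_zero : HasDerivWithinAt (sineSolution V 0 l) 0 (Icc 0 1) 0 :=
    (hasDerivWithinAt_const _ _ _).congr hzero (hzero 0 h0)
  have h10 := (uniqueDiffOn_Icc_zero_one 0 h0).eq_deriv _ hderiv hderiv_zero
  rw [sineSolutionDeriv_self hV h0] at h10
  exact one_ne_zero h10

theorem integral_norm_sq_sineSolution_pos (hV : ContinuousOn V (Icc 0 1)) (l : ℂ) :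
    0 < ∫ x in (0 : ℝ)..1, ‖sineSolution V 0 l x‖ ^ 2 := by
  obtain ⟨x, hx, hne⟩ := exists_sineSolution_ne_zero hV l
  have hcont := (isSchrodingerSolution_sineSolution hV unitInterval.zero_mem l).continuousOn
  exact intervalIntegral.integral_pos one_pos (hcont.norm.pow 2) (fun x _ ↦ sq_nonneg _)
    ⟨x, hx, by positivity⟩

theorem exists_eq_ofReal_of_sineSolution_eq_zero (hV : ContinuousOn V (Icc 0 1))
    (hl : sineSolution V 0 l 1 = 0) : ∃ μ : ℝ, l = μ := by
  have h0 : (0 : ℝ) ∈ Icc (0 : ℝ) 1 := unitInterval.zero_mem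
  have hS := isSchrodingerSolution_sineSolution hV h0 l
  have hgreen := hS.wronskian_sub_wronskian_of_eqOn hS.conj h0 unitInterval.one_mem zero_le_one
    (eqOn_refl V _)
  have hnorm : ∫ x in (0 : ℝ)..1, sineSolution V 0 l x * starRingEnd ℂ (sineSolution V 0 l x)
      = ((∫ x in (0 : ℝ)..1, ‖sineSolution V 0 l x‖ ^ 2 : ℝ) : ℂ) := by
    rw [← intervalIntegral.integral_ofReal]
    simp only [Complex.mul_conj', Complex.ofReal_pow]
  have hpos := integral_norm_sq_sineSolution_pos hV l
  simp only [hl, sineSolution_self hV h0, map_zero, mul_zero, zero_mul, sub_zero, hnorm] at hgreen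
  have hreal : l - starRingEnd ℂ l = 0 :=
    (mul_eq_zero.1 hgreen.symm).resolve_right (Complex.ofReal_ne_zero.2 hpos.ne')
  exact ⟨l.re, (Complex.conj_eq_iff_re.1 (sub_eq_zero.1 hreal).symm).symm⟩

theorem IsSchrodingerSolution.isDirichletEigenpair_re {y y' : ℝ → ℂ}
    (hy : IsSchrodingerSolution V μ y y') (hV : ContinuousOn V (Icc 0 1))
    (hne : ∃ x ∈ Icc (0 : ℝ) 1, (y x).re ≠ 0) (hy0 : (y 0).re = 0) (hy1 : (y 1).re = 0) :
    IsDirichletEigenpair V μ fun x ↦ (y x).re := by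
  have hunique : UniqueDiffOn ℝ (Icc (0 : ℝ) 1) := uniqueDiffOn_Icc_zero_one
  have hcont : ContinuousOn (fun x ↦ (y x).re) (Icc 0 1) :=
    Complex.continuous_re.comp_continuousOn hy.continuousOn
  have hderiv : ∀ x ∈ Icc (0 : ℝ) 1,
      HasDerivWithinAt (fun x ↦ (y x).re) (y' x).re (Icc 0 1) x := fun x hx ↦
    Complex.reCLM.hasFDerivAt.comp_hasDerivWithinAt x (hy.hasDerivWithinAt x hx)
  have hderiv₂ : ∀ x ∈ Icc (0 : ℝ) 1,
      HasDerivWithinAt (fun x ↦ (y' x).re) ((V x - μ) * (y x).re) (Icc 0 1) x := fun x hx ↦ by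
    refine (Complex.reCLM.hasFDerivAt.comp_hasDerivWithinAt x
      (hy.hasDerivWithinAt_deriv x hx)).congr_deriv ?_
    rw [Complex.reCLM_apply, ← Complex.ofReal_sub, Complex.re_ofReal_mul]
  have heq : EqOn (derivWithin (fun x ↦ (y x).re) (Icc 0 1)) (fun x ↦ (y' x).re) (Icc 0 1) :=
    fun x hx ↦ (hderiv x hx).derivWithin (hunique x hx)
  refine ⟨contDiffOn_succ_of_hasDerivWithinAt (n := 1) hunique hderiv
    (contDiffOn_succ_of_hasDerivWithinAt (n := 0) hunique hderiv₂
      (contDiffOn_zero.2 ((hV.sub continuousOn_const).mul hcont))), hne, fun x hx ↦ ?_, hy0, hy1⟩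
  have hx' := Ioo_subset_Icc_self hx
  rw [derivWithin_congr heq (heq hx'), (hderiv₂ x hx').derivWithin (hunique x hx')]
  ring

theorem isDirichletEigenpair_re_sineSolution (hV : ContinuousOn V (Icc 0 1))
    (hμ : sineSolution V 0 μ 1 = 0) :
    IsDirichletEigenpair V μ fun x ↦ (sineSolution V 0 μ x).re := by
  have h0 : (0 : ℝ) ∈ Icc (0 : ℝ) 1 := unitInterval.zero_mem
  obtain ⟨x, hx, hne⟩ := exists_sineSolution_ne_zero hV μ
  rw [← ofReal_re_sineSolution hV μ hx, Complex.ofReal_ne_zero] at hne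
  refine (isSchrodingerSolution_sineSolution hV h0 μ).isDirichletEigenpair_re hV ⟨x, hx, hne⟩ ?_ ?_
  · rw [sineSolution_self hV h0, Complex.zero_re]
  · rw [hμ, Complex.zero_re]

theorem deriv_sineSolution_mul_sineSolutionDeriv (hV : ContinuousOn V (Icc 0 1))
    (hμ : sineSolution V 0 μ 1 = 0) :
    deriv (fun l ↦ sineSolution V 0 l 1) μ * sineSolutionDeriv V 0 μ 1
      = ((∫ x in (0 : ℝ)..1, ‖sineSolution V 0 μ x‖ ^ 2 : ℝ) : ℂ) := by
  have h0 : (0 : ℝ) ∈ Icc (0 : ℝ) 1 := unitInterval.zero_mem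
  have h1 : (1 : ℝ) ∈ Icc (0 : ℝ) 1 := unitInterval.one_mem
  have hS := isSchrodingerSolution_sineSolution hV h0
  have hgreen : (fun l : ℂ ↦ sineSolution V 0 l 1 * sineSolutionDeriv V 0 μ 1) = fun l ↦
      (l - μ) * ∫ x in (0 : ℝ)..1, sineSolution V 0 μ x * sineSolution V 0 l x := by
    funext l
    have hgreen := (hS l).wronskian_sub_wronskian_of_eqOn (hS μ) h0 h1 zero_le_one (eqOn_refl V _)
    simp only [hμ, sineSolution_self hV h0, mul_zero, zero_mul, sub_zero] at hgreen
    simp only [hgreen, mul_comm (sineSolution V 0 μ _)]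
  have hleft := ((differentiable_sineSolution hV h0 h1) μ).hasDerivAt.mul_const
    (sineSolutionDeriv V 0 μ 1)
  have hright := ((hasDerivAt_id (μ : ℂ)).sub_const (μ : ℂ)).fun_mul
    ((isEntireSolution_sineSolution hV h0).differentiable_integral _ (hS μ).continuousOn 0 h0 1 h1
      μ).hasDerivAt
  rw [hleft.unique (hgreen ▸ hright), id, sub_self, zero_mul, add_zero, one_mul,
    ← intervalIntegral.integral_ofReal]
  refine intervalIntegral.integral_congr fun x hx ↦ ?_
  have hconj := sineSolution_conj hV μ (uIcc_of_le zero_le_one (α := ℝ) ▸ hx)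
  rw [Complex.conj_ofReal] at hconj
  rw [Complex.ofReal_pow, ← Complex.conj_mul', ← hconj]

theorem deriv_sineSolution_ne_zero (hV : ContinuousOn V (Icc 0 1))
    (hl : sineSolution V 0 l 1 = 0) : deriv (fun l ↦ sineSolution V 0 l 1) l ≠ 0 := by
  obtain ⟨μ, rfl⟩ := exists_eq_ofReal_of_sineSolution_eq_zero hV hl
  refine left_ne_zero_of_mul (b := sineSolutionDeriv V 0 μ 1) ?_
  rw [deriv_sineSolution_mul_sineSolutionDeriv hV hl]
  exact Complex.ofReal_ne_zero.2 (integral_norm_sq_sineSolution_pos hV μ).ne'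

end DirichletEigenvalues

/-- The integral transform of `h` against the sine solutions started at `0`. -/
noncomputable def sineTransform (V : ℝ → ℝ) (h : ℝ → ℝ) (l : ℂ) : ℂ :=
  ∫ x in (0 : ℝ)..1, h x * sineSolution V 0 l x

/-- The product of the Fourier coefficient of `h` along `ψ` with the slope of `ψ` at the endpoint
`1`: the coefficient of `exp (-μ * t)` in the boundary measurement of the initial datum `h` if `ψ`
is the normalized eigenfunction of eigenvalue `μ`. -/
noncomputable def boundaryCoefficient (h ψ : ℝ → ℝ) : ℝ :=
  (∫ x in (0 : ℝ)..1, h x * ψ x) * derivWithin ψ (Icc 0 1) 1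

namespace IsDirichletEigenpair

variable {V : ℝ → ℝ} {μ ν : ℝ} {ψ χ : ℝ → ℝ} {x : ℝ}

theorem isSchrodingerSolution (hψ : IsDirichletEigenpair V μ ψ) (hV : ContinuousOn V (Icc 0 1)) :
    IsSchrodingerSolution V μ (fun x ↦ ψ x) fun x ↦ (derivWithin ψ (Icc 0 1) x : ℝ) := by
  obtain ⟨hsmooth, -, hode, -, -⟩ := hψ
  have hunique : UniqueDiffOn ℝ (Icc (0 : ℝ) 1) := uniqueDiffOn_Icc_zero_one
  have hsmooth' : ContDiffOn ℝ 1 (derivWithin ψ (Icc 0 1)) (Icc 0 1) :=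
    hsmooth.derivWithin hunique (by norm_num)
  have hdiff : DifferentiableOn ℝ ψ (Icc 0 1) := hsmooth.differentiableOn (by norm_num)
  have hode' : EqOn (derivWithin (derivWithin ψ (Icc 0 1)) (Icc 0 1))
      (fun x ↦ (V x - μ) * ψ x) (Icc 0 1) :=
    EqOn.of_subset_closure (s := Ioo 0 1) (fun x hx ↦ by linear_combination -hode x hx)
      (hsmooth'.continuousOn_derivWithin hunique (by norm_num))
      ((hV.sub continuousOn_const).mul hdiff.continuousOn) Ioo_subset_Icc_self
      (closure_Ioo zero_ne_one).ge
  refine ⟨fun x hx ↦ (hdiff x hx).hasDerivWithinAt.ofReal_comp, fun x hx ↦ ?_⟩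
  have hderiv := ((hsmooth'.differentiableOn (by norm_num)) x hx).hasDerivWithinAt.ofReal_comp
  rw [hode' hx] at hderiv
  exact hderiv.congr_deriv (by push_cast; ring)

theorem integral_mul_eq_zero (hψ : IsDirichletEigenpair V μ ψ) (hχ : IsDirichletEigenpair V ν χ)
    (hV : ContinuousOn V (Icc 0 1)) (hμν : μ ≠ ν) : ∫ x in (0 : ℝ)..1, ψ x * χ x = 0 := by
  have hgreen := (hψ.isSchrodingerSolution hV).wronskian_sub_wronskian_of_eqOn
    (hχ.isSchrodingerSolution hV) unitInterval.zero_mem unitInterval.one_mem zero_le_one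
    (eqOn_refl V _)
  obtain ⟨-, -, -, hψ0, hψ1⟩ := hψ
  obtain ⟨-, -, -, hχ0, hχ1⟩ := hχ
  simp only [← Complex.ofReal_mul, intervalIntegral.integral_ofReal, hψ0, hψ1, hχ0, hχ1, mul_zero,
    zero_mul, sub_zero, Complex.ofReal_zero] at hgreen
  norm_cast at hgreen
  exact (mul_eq_zero.1 hgreen.symm).resolve_left (sub_ne_zero.2 hμν)

theorem re_sineSolution_mul_derivWithin (hψ : IsDirichletEigenpair V μ ψ)
    (hV : ContinuousOn V (Icc 0 1)) (m : ℝ) :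
    (sineSolution V 0 m 1).re * derivWithin ψ (Icc 0 1) 1
      = (m - μ) * ∫ x in (0 : ℝ)..1, (sineSolution V 0 m x).re * ψ x := by
  have h0 : (0 : ℝ) ∈ Icc (0 : ℝ) 1 := unitInterval.zero_mem
  have h1 : (1 : ℝ) ∈ Icc (0 : ℝ) 1 := unitInterval.one_mem
  have hgreen := (isSchrodingerSolution_sineSolution hV h0 m).wronskian_sub_wronskian_of_eqOn
    (hψ.isSchrodingerSolution hV) h0 h1 zero_le_one (eqOn_refl V _)
  have hintegral : ∫ x in (0 : ℝ)..1, sineSolution V 0 m x * ψ x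
      = ((∫ x in (0 : ℝ)..1, (sineSolution V 0 m x).re * ψ x : ℝ) : ℂ) := by
    rw [← intervalIntegral.integral_ofReal]
    refine intervalIntegral.integral_congr fun x hx ↦ ?_
    rw [uIcc_of_le zero_le_one] at hx
    rw [Complex.ofReal_mul, ofReal_re_sineSolution hV m hx]
  obtain ⟨-, -, -, hψ0, hψ1⟩ := hψ
  rw [hintegral, hψ0, hψ1, sineSolution_self hV h0, ← ofReal_re_sineSolution hV m h1] at hgreen
  simpa using congrArg Complex.re hgreen

theorem eq_mul_sineSolution (hψ : IsDirichletEigenpair V μ ψ) (hV : ContinuousOn V (Icc 0 1))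
    (hx : x ∈ Icc (0 : ℝ) 1) :
    (ψ x : ℂ) = (derivWithin ψ (Icc 0 1) 0 : ℝ) * sineSolution V 0 μ x ∧
      ((derivWithin ψ (Icc 0 1) x : ℝ) : ℂ)
        = (derivWithin ψ (Icc 0 1) 0 : ℝ) * sineSolutionDeriv V 0 μ x := by
  have hψ0 : ψ 0 = 0 := hψ.2.2.2.1
  simpa only [hψ0, Complex.ofReal_zero, zero_mul, zero_add] using
    (hψ.isSchrodingerSolution hV).eq_cosineSolution_add_sineSolution hV unitInterval.zero_mem hx

theorem sineSolution_eq_zero (hψ : IsDirichletEigenpair V μ ψ) (hV : ContinuousOn V (Icc 0 1)) :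
    sineSolution V 0 μ 1 = 0 := by
  obtain ⟨x, hx, hne⟩ := hψ.2.1
  have hψ1 : ψ 1 = 0 := hψ.2.2.2.2
  have hmul := (hψ.eq_mul_sineSolution hV unitInterval.one_mem).1
  rw [hψ1, Complex.ofReal_zero] at hmul
  refine (mul_eq_zero.1 hmul.symm).resolve_left fun hderiv ↦ hne ?_
  rw [← Complex.ofReal_eq_zero, (hψ.eq_mul_sineSolution hV hx).1, hderiv, zero_mul]

theorem boundaryCoefficient_mul_deriv (hψ : IsDirichletEigenpair V μ ψ)
    (hV : ContinuousOn V (Icc 0 1)) (hnorm : ∫ x in (0 : ℝ)..1, ψ x ^ 2 = 1) (h : ℝ → ℝ) :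
    boundaryCoefficient h ψ * deriv (fun l ↦ sineSolution V 0 l 1) μ = sineTransform V h μ := by
  have heq := fun x (hx : x ∈ Icc (0 : ℝ) 1) ↦ hψ.eq_mul_sineSolution hV hx
  set κ := derivWithin ψ (Icc 0 1) 0
  have hcoeff : ((∫ x in (0 : ℝ)..1, h x * ψ x : ℝ) : ℂ) = κ * sineTransform V h μ := by
    rw [sineTransform, ← intervalIntegral.integral_ofReal, ← intervalIntegral.integral_const_mul]
    refine intervalIntegral.integral_congr fun x hx ↦ ?_
    rw [uIcc_of_le zero_le_one] at hx
    rw [Complex.ofReal_mul, (heq x hx).1]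
    ring
  have hsq : κ ^ 2 * (∫ x in (0 : ℝ)..1, ‖sineSolution V 0 μ x‖ ^ 2) = 1 := by
    rw [← intervalIntegral.integral_const_mul]
    refine (intervalIntegral.integral_congr fun x hx ↦ ?_).trans hnorm
    rw [uIcc_of_le zero_le_one] at hx
    have hnorm_eq := congrArg (fun z : ℂ ↦ ‖z‖ ^ 2) (heq x hx).1
    simpa only [norm_mul, Complex.norm_real, mul_pow, Real.norm_eq_abs, sq_abs]
      using hnorm_eq.symm
  have hnormalized := congrArg Complex.ofReal hsq
  push_cast [← deriv_sineSolution_mul_sineSolutionDeriv hV (hψ.sineSolution_eq_zero hV)]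
    at hnormalized
  rw [boundaryCoefficient, Complex.ofReal_mul, hcoeff, (heq 1 unitInterval.one_mem).2]
  linear_combination sineTransform V h μ * hnormalized

end IsDirichletEigenpair

theorem summable_sq_integral_mul_of_orthonormal {α ι : Type*} [MeasurableSpace α] {ν : Measure α}
    {φ : ι → α → ℝ} {f : α → ℝ} (hφ : ∀ k, MemLp (φ k) 2 ν) (hf : MemLp f 2 ν)
    (hnorm : ∀ k, ∫ x, φ k x ^ 2 ∂ν = 1)
    (horth : Pairwise fun j k ↦ ∫ x, φ j x * φ k x ∂ν = 0) :
    Summable fun k ↦ (∫ x, f x * φ k x ∂ν) ^ 2 := by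
  have hinner {u v : α → ℝ} (hu : MemLp u 2 ν) (hv : MemLp v 2 ν) :
      inner ℝ (hu.toLp u) (hv.toLp v) = ∫ x, v x * u x ∂ν := by
    rw [L2.inner_def]
    refine integral_congr_ae ?_
    filter_upwards [hu.coeFn_toLp, hv.coeFn_toLp] with x hux hvx
    rw [hux, hvx, Real.inner_apply, mul_comm]
  have hortho : Orthonormal ℝ fun k ↦ (hφ k).toLp (φ k) := by
    classical
    refine orthonormal_iff_ite.2 fun j k ↦ ?_
    rw [hinner]
    split_ifs with hjk
    · simpa only [hjk, sq] using hnorm k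
    · exact horth (Ne.symm hjk)
  simpa only [hinner, Real.norm_eq_abs, sq_abs] using
    hortho.inner_products_summable (hf.toLp f)

theorem summable_abs_mul_exp_of_summable_sq {ι : Type*} {c d L : ι → ℝ} {m t : ℝ}
    (hc : Summable fun k ↦ c k ^ 2) (hd : Summable fun k ↦ d k ^ 2) (hL : ∀ k, m ≤ L k)
    (ht : 0 < t) :
    Summable fun k ↦ |c k * ((m - L k) * d k)| * Real.exp (-L k * t) := by
  have hlinear (k : ι) : |m - L k| * Real.exp (-L k * t) ≤ Real.exp (-m * t) / t := by
    rw [abs_sub_comm, abs_of_nonneg (sub_nonneg.2 (hL k)), le_div_iff₀ ht]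
    calc (L k - m) * Real.exp (-L k * t) * t
        = (L k - m) * t * Real.exp (-((L k - m) * t)) * Real.exp (-m * t) := by
          rw [mul_assoc (_ * t), ← Real.exp_add]
          ring_nf
      _ ≤ Real.exp (-1) * Real.exp (-m * t) := by
          gcongr
          exact Real.mul_exp_neg_le_exp_neg_one _
      _ ≤ Real.exp (-m * t) :=
          mul_le_of_le_one_left (Real.exp_nonneg _) (Real.exp_le_one_iff.2 (by norm_num))
  refine ((hc.add hd).mul_left (Real.exp (-m * t) / t)).of_nonneg_of_le
    (fun k ↦ by positivity) fun k ↦ ?_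
  calc |c k * ((m - L k) * d k)| * Real.exp (-L k * t)
      = |m - L k| * Real.exp (-L k * t) * (|c k| * |d k|) := by
        rw [abs_mul, abs_mul]
        ring
    _ ≤ Real.exp (-m * t) / t * (c k ^ 2 + d k ^ 2) := by
        have hamgm : |c k| * |d k| ≤ c k ^ 2 + d k ^ 2 := by
          nlinarith [sq_abs (c k), sq_abs (d k), sq_nonneg (|c k| - |d k|), sq_nonneg (|c k|),
            sq_nonneg (|d k|)]
        gcongr
        exact hlinear k

namespace IsDirichletSystem

variable {V : ℝ → ℝ} {lam : ℕ → ℝ} {phi : ℕ → ℝ → ℝ}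

theorem summable_sq_integral_mul (hsys : IsDirichletSystem V lam phi)
    (hV : ContinuousOn V (Icc 0 1)) {f : ℝ → ℝ} (hf : ContinuousOn f (Icc 0 1)) :
    Summable fun k ↦ (∫ x in (0 : ℝ)..1, f x * phi k x) ^ 2 := by
  obtain ⟨hmono, -, hpair, hnorm, -⟩ := hsys
  have hmemLp {u : ℝ → ℝ} (hu : ContinuousOn u (Icc 0 1)) :
      MemLp u 2 (volume.restrict (Ioc 0 1)) :=
    ((memLp_two_iff_integrable_sq (hu.aestronglyMeasurable measurableSet_Icc)).2
      (hu.pow 2).integrableOn_Icc).mono_measure (Measure.restrict_mono Ioc_subset_Icc_self le_rfl)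
  have horth : Pairwise fun j k ↦ ∫ x in (0 : ℝ)..1, phi j x * phi k x = 0 := fun j k hjk ↦
    (hpair j).integral_mul_eq_zero (hpair k) hV (hmono.injective.ne hjk)
  simp only [intervalIntegral.integral_of_le zero_le_one] at hnorm horth ⊢
  exact summable_sq_integral_mul_of_orthonormal (fun k ↦ hmemLp (hpair k).1.continuousOn)
    (hmemLp hf) hnorm horth

theorem exists_eq_of_sineSolution_eq_zero (hsys : IsDirichletSystem V lam phi)
    (hV : ContinuousOn V (Icc 0 1)) {l : ℂ} (hl : sineSolution V 0 l 1 = 0) :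
    ∃ k, l = lam k := by
  obtain ⟨μ, rfl⟩ := exists_eq_ofReal_of_sineSolution_eq_zero hV hl
  obtain ⟨k, rfl⟩ := hsys.2.2.2.2 μ _ (isDirichletEigenpair_re_sineSolution hV hl)
  exact ⟨k, rfl⟩

theorem summable_abs_boundaryCoefficient_mul_exp (hsys : IsDirichletSystem V lam phi)
    (hV : ContinuousOn V (Icc 0 1)) {h : ℝ → ℝ} (hh : ContinuousOn h (Icc 0 1)) {t : ℝ}
    (ht : 0 < t) :
    Summable fun k ↦ |boundaryCoefficient h (phi k)| * Real.exp (-lam k * t) := by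
  set m : ℝ := lam 0 - 1
  have hm (k : ℕ) : m < lam k :=
    (sub_one_lt _).trans_le (hsys.1.monotone k.zero_le)
  set s : ℝ → ℝ := fun x ↦ (sineSolution V 0 m x).re
  have hs : ContinuousOn s (Icc 0 1) := Complex.continuous_re.comp_continuousOn
    (isSchrodingerSolution_sineSolution hV unitInterval.zero_mem m).continuousOn
  have hs1 : s 1 ≠ 0 := fun hzero ↦ by
    rw [← Complex.ofReal_eq_zero, ofReal_re_sineSolution hV m unitInterval.one_mem] at hzero
    obtain ⟨k, hk⟩ := hsys.exists_eq_of_sineSolution_eq_zero hV hzero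
    exact (hm k).ne (Complex.ofReal_injective hk)
  refine ((summable_abs_mul_exp_of_summable_sq (hsys.summable_sq_integral_mul hV hh)
    (hsys.summable_sq_integral_mul hV hs) (fun k ↦ (hm k).le) ht).mul_left |s 1|⁻¹).congr
    fun k ↦ ?_
  have hboundary : s 1 * derivWithin (phi k) (Icc 0 1) 1
      = (m - lam k) * ∫ x in (0 : ℝ)..1, s x * phi k x :=
    (hsys.2.2.1 k).re_sineSolution_mul_derivWithin hV m
  rw [boundaryCoefficient, ← hboundary, mul_left_comm _ (s 1), abs_mul (s 1), mul_assoc,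
    inv_mul_cancel_left₀ (abs_ne_zero.2 hs1)]

end IsDirichletSystem

section Residue

/-- The residue of `A / B` at `z`, for entire `A` and `B` such that all zeros of `B` are simple. -/
noncomputable def simpleResidue (A B : ℂ → ℂ) (z : ℂ) : ℂ :=
  open Classical in if B z = 0 then A z / deriv B z else 0

variable {A B A₁ A₂ B₁ B₂ : ℂ → ℂ} {z : ℂ}

theorem simpleResidue_of_eq_zero (hz : B z = 0) : simpleResidue A B z = A z / deriv B z :=
  if_pos hz

theorem simpleResidue_of_ne_zero (hz : B z ≠ 0) : simpleResidue A B z = 0 :=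
  if_neg hz

theorem simpleResidue_mul_deriv (hz : B z = 0) (hz' : deriv B z ≠ 0) :
    simpleResidue A B z * deriv B z = A z := by
  rw [simpleResidue_of_eq_zero hz, div_mul_cancel₀ _ hz']

/-- `f` is `A₁ / B₁ - A₂ / B₂` with the poles removed; the identity is cleared of denominators to
avoid the junk values of the quotients at their poles. -/
theorem exists_differentiable_mul_eq_sub (hA₁ : Differentiable ℂ A₁) (hA₂ : Differentiable ℂ A₂)
    (hB₁ : Differentiable ℂ B₁) (hB₂ : Differentiable ℂ B₂)
    (hsimple₁ : ∀ z, B₁ z = 0 → deriv B₁ z ≠ 0) (hsimple₂ : ∀ z, B₂ z = 0 → deriv B₂ z ≠ 0)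
    (hres : ∀ z, simpleResidue A₁ B₁ z = simpleResidue A₂ B₂ z) :
    ∃ f : ℂ → ℂ, Differentiable ℂ f ∧
      ∀ z, f z * (B₁ z * B₂ z) = A₁ z * B₂ z - A₂ z * B₁ z := by
  set N : ℂ → ℂ := fun z ↦ A₁ z * B₂ z - A₂ z * B₁ z with hNdef
  have hN : Differentiable ℂ N := (hA₁.fun_mul hB₂).fun_sub (hA₂.fun_mul hB₁)
  have hN_zero (z : ℂ) (hz : B₁ z = 0) : N z = 0 := by
    have hA : A₁ z * B₂ z = 0 := by
      rw [← simpleResidue_mul_deriv (A := A₁) hz (hsimple₁ z hz), hres]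
      by_cases hz₂ : B₂ z = 0
      · rw [hz₂, mul_zero]
      · rw [simpleResidue_of_ne_zero hz₂, zero_mul, zero_mul]
    simp only [hNdef, hA, hz, mul_zero, sub_zero]
  have hq_zero (z : ℂ) (hz : B₂ z = 0) : entireQuotient N B₁ z = 0 := by
    have hA₂z := simpleResidue_mul_deriv (A := A₂) hz (hsimple₂ z hz)
    by_cases hz₁ : B₁ z = 0
    · have hA₁z := simpleResidue_mul_deriv (A := A₁) hz₁ (hsimple₁ z hz₁)
      have hderiv := ((hA₁ z).hasDerivAt.mul (hB₂ z).hasDerivAt).sub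
        ((hA₂ z).hasDerivAt.mul (hB₁ z).hasDerivAt)
      have hderivN : deriv N z = 0 := by
        rw [show deriv N z = _ from hderiv.deriv, hz, hz₁, ← hA₁z, ← hA₂z, hres]
        ring
      rw [entireQuotient_of_eq_zero hz₁, hderivN, zero_div]
    · rw [← hres, simpleResidue_of_ne_zero hz₁, zero_mul] at hA₂z
      rw [entireQuotient_of_ne_zero hz₁, hNdef]
      simp only [hz, ← hA₂z, mul_zero, zero_mul, sub_zero, zero_div]
  refine ⟨_, differentiable_entireQuotient
    (differentiable_entireQuotient hN hB₁ hsimple₁ hN_zero) hB₂ hsimple₂ hq_zero, fun z ↦ ?_⟩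
  rw [mul_comm (B₁ z), ← mul_assoc, entireQuotient_mul_cancel hq_zero,
    entireQuotient_mul_cancel hN_zero]

end Residue

section SineTransform

variable {V V₁ V₂ h h₁ h₂ : ℝ → ℝ} {e : ℝ}

theorem continuousOn_ofReal_comp (hh : ContinuousOn h (Icc 0 1)) :
    ContinuousOn (fun x ↦ (h x : ℂ)) (Icc 0 1) :=
  Complex.continuous_ofReal.comp_continuousOn hh

theorem differentiable_sineTransform (hV : ContinuousOn V (Icc 0 1))
    (hh : ContinuousOn h (Icc 0 1)) : Differentiable ℂ (sineTransform V h) :=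
  (isEntireSolution_sineSolution hV unitInterval.zero_mem).differentiable_integral _
    (continuousOn_ofReal_comp hh) 0 unitInterval.zero_mem 1 unitInterval.one_mem

theorem hasExpUpperBound_sineTransform (hV : ContinuousOn V (Icc 0 1))
    (hh : ContinuousOn h (Icc 0 1)) (hsupp : ∀ x ∈ Icc (0 : ℝ) 1, e < x → h x = 0) :
    HasExpUpperBound e 1 (sineTransform V h) := by
  refine hasExpUpperBound_integral_mul_sineSolution hV unitInterval.zero_mem
    (continuousOn_ofReal_comp hh) unitInterval.zero_mem unitInterval.one_mem fun s hs hne ↦ ?_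
  rw [uIcc_of_le zero_le_one] at hs
  rw [sub_zero, abs_of_nonneg hs.1]
  by_contra! hlt
  exact hne (by rw [hsupp s hs hlt, Complex.ofReal_zero])

theorem eq_of_sineTransform_eq (hV : ContinuousOn V (Icc 0 1)) (hh₁ : ContinuousOn h₁ (Icc 0 1))
    (hh₂ : ContinuousOn h₂ (Icc 0 1)) (heq : ∀ l, sineTransform V h₁ l = sineTransform V h₂ l) :
    EqOn h₁ h₂ (Icc 0 1) := fun x hx ↦ by
  have hc₁ := continuousOn_ofReal_comp hh₁
  have hc₂ := continuousOn_ofReal_comp hh₂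
  have hzero := eq_zero_of_integral_mul_sineSolution_eq_zero hV (hc₁.fun_sub hc₂) (fun l ↦ ?_) hx
  · exact_mod_cast sub_eq_zero.1 hzero
  · have hS := (isSchrodingerSolution_sineSolution hV unitInterval.zero_mem l).continuousOn
    simp only [sub_mul]
    rw [intervalIntegral.integral_sub
      (intervalIntegrable_of_mem_Icc (hc₁.fun_mul hS) unitInterval.zero_mem unitInterval.one_mem)
      (intervalIntegrable_of_mem_Icc (hc₂.fun_mul hS) unitInterval.zero_mem unitInterval.one_mem)]
    exact sub_eq_zero.2 (heq l)

theorem exists_sineTransform_ne_zero (hV : ContinuousOn V (Icc 0 1))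
    (hh : ContinuousOn h (Icc 0 1)) (hne : ∃ x ∈ Icc (0 : ℝ) 1, h x ≠ 0) :
    ∃ l, sineTransform V h l ≠ 0 := by
  by_contra! hzero
  obtain ⟨x, hx, hxne⟩ := hne
  refine hxne (eq_of_sineTransform_eq hV hh (h₂ := 0) continuousOn_const (fun l ↦ ?_) hx)
  rw [hzero l]
  simp only [sineTransform, Pi.zero_apply, Complex.ofReal_zero, zero_mul,
    intervalIntegral.integral_zero]

theorem sineTransform_mul_sineSolution_eq (hV₁ : ContinuousOn V₁ (Icc 0 1))
    (hV₂ : ContinuousOn V₂ (Icc 0 1)) (hh₁ : ContinuousOn h₁ (Icc 0 1))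
    (hh₂ : ContinuousOn h₂ (Icc 0 1)) (he : e < 1)
    (hsupp₁ : ∀ x ∈ Icc (0 : ℝ) 1, e < x → h₁ x = 0)
    (hsupp₂ : ∀ x ∈ Icc (0 : ℝ) 1, e < x → h₂ x = 0)
    (hres : ∀ l, simpleResidue (sineTransform V₁ h₁) (fun l ↦ sineSolution V₁ 0 l 1) l
      = simpleResidue (sineTransform V₂ h₂) (fun l ↦ sineSolution V₂ 0 l 1) l) (l : ℂ) :
    sineTransform V₁ h₁ l * sineSolution V₂ 0 l 1
      = sineTransform V₂ h₂ l * sineSolution V₁ 0 l 1 := by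
  have h0 : (0 : ℝ) ∈ Icc 0 1 := unitInterval.zero_mem
  have h1 : (1 : ℝ) ∈ Icc 0 1 := unitInterval.one_mem
  obtain ⟨f, hf, hfmul⟩ := exists_differentiable_mul_eq_sub (differentiable_sineTransform hV₁ hh₁)
    (differentiable_sineTransform hV₂ hh₂) (differentiable_sineSolution hV₁ h0 h1)
    (differentiable_sineSolution hV₂ h0 h1) (fun _ ↦ deriv_sineSolution_ne_zero hV₁)
    (fun _ ↦ deriv_sineSolution_ne_zero hV₂) hres
  have hupper := ((hasExpUpperBound_sineTransform hV₁ hh₁ hsupp₁).mul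
    (hasExpUpperBound_sineSolution hV₂ h0 h1)).sub
    ((hasExpUpperBound_sineTransform hV₂ hh₂ hsupp₂).mul
      (hasExpUpperBound_sineSolution hV₁ h0 h1))
  have hlower := (hasExpLowerBound_sineSolution hV₁ le_rfl one_pos le_rfl).mul
    (hasExpLowerBound_sineSolution hV₂ le_rfl one_pos le_rfl)
  simp only [sub_zero, abs_one] at hupper hlower
  have hf_zero : f = 0 := eq_zero_of_growth_mul hf (tendsto_sineRadius one_pos) hlower
    (by simpa only [hfmul] using hupper) (by gcongr) le_rfl (.inl (by gcongr))
  have := hfmul l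
  rw [hf_zero, Pi.zero_apply, zero_mul] at this
  exact sub_eq_zero.1 this.symm

end SineTransform

section BoundaryData

theorem boundaryMeasurement_eq_tsum (b g : ℝ → ℝ) (lam : ℕ → ℝ) (phi : ℕ → ℝ → ℝ) (t : ℝ) :
    boundaryMeasurement b g lam phi t
      = ∑' k, boundaryCoefficient (gaugedDatum b g) (phi k) * Real.exp (-lam k * t) :=
  tsum_congr fun _ ↦ mul_right_comm _ _ _

variable {V V₁ V₂ h h₁ h₂ : ℝ → ℝ} {lam lam₁ lam₂ : ℕ → ℝ} {phi phi₁ phi₂ : ℕ → ℝ → ℝ}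

theorem IsDirichletSystem.simpleResidue_sineTransform (hsys : IsDirichletSystem V lam phi)
    (hV : ContinuousOn V (Icc 0 1)) (h : ℝ → ℝ) (ν : ℝ) :
    simpleResidue (sineTransform V h) (fun l ↦ sineSolution V 0 l 1) ν
      = (∑' k : lam ⁻¹' {ν}, boundaryCoefficient h (phi k) : ℝ) := by
  by_cases hν : sineSolution V 0 ν 1 = 0
  · obtain ⟨k, hk⟩ := hsys.exists_eq_of_sineSolution_eq_zero hV hν
    obtain rfl : ν = lam k := Complex.ofReal_injective hk
    have hfiber : lam ⁻¹' {lam k} = {k} := by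
      rw [← image_singleton, preimage_image_eq _ hsys.1.injective]
    rw [hfiber, tsum_singleton k fun k ↦ boundaryCoefficient h (phi k), simpleResidue_of_eq_zero hν,
      ← (hsys.2.2.1 k).boundaryCoefficient_mul_deriv hV (hsys.2.2.2.1 k) h,
      mul_div_cancel_right₀ _ (deriv_sineSolution_ne_zero hV hν)]
  · have hfiber : lam ⁻¹' {ν} = ∅ := by
      refine preimage_singleton_eq_empty.2 ?_
      rintro ⟨k, rfl⟩
      exact hν ((hsys.2.2.1 k).sineSolution_eq_zero hV)
    rw [simpleResidue_of_ne_zero hν, hfiber, tsum_empty, Complex.ofReal_zero]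

theorem simpleResidue_sineTransform_eq_of_frequently_eq (hV₁ : ContinuousOn V₁ (Icc 0 1))
    (hV₂ : ContinuousOn V₂ (Icc 0 1)) (hh₁ : ContinuousOn h₁ (Icc 0 1))
    (hh₂ : ContinuousOn h₂ (Icc 0 1)) (hsys₁ : IsDirichletSystem V₁ lam₁ phi₁)
    (hsys₂ : IsDirichletSystem V₂ lam₂ phi₂) {T : ℝ} (hT : 0 < T)
    (hfreq : ∃ᶠ t in 𝓝[≠] T, ∑' k, boundaryCoefficient h₁ (phi₁ k) * Real.exp (-lam₁ k * t)
      = ∑' k, boundaryCoefficient h₂ (phi₂ k) * Real.exp (-lam₂ k * t)) (l : ℂ) :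
    simpleResidue (sineTransform V₁ h₁) (fun l ↦ sineSolution V₁ 0 l 1) l
      = simpleResidue (sineTransform V₂ h₂) (fun l ↦ sineSolution V₂ 0 l 1) l := by
  by_cases hl : ∃ ν : ℝ, l = ν
  · obtain ⟨ν, rfl⟩ := hl
    rw [hsys₁.simpleResidue_sineTransform hV₁, hsys₂.simpleResidue_sineTransform hV₂]
    congr 1
    exact tsum_fiber_eq_of_frequently_eq
      ⟨lam₁ 0, forall_mem_range.2 fun k ↦ hsys₁.1.monotone k.zero_le⟩
      ⟨lam₂ 0, forall_mem_range.2 fun k ↦ hsys₂.1.monotone k.zero_le⟩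
      (fun t ht ↦ hsys₁.summable_abs_boundaryCoefficient_mul_exp hV₁ hh₁ ht)
      (fun t ht ↦ hsys₂.summable_abs_boundaryCoefficient_mul_exp hV₂ hh₂ ht) hT hfreq ν
  · rw [simpleResidue_of_ne_zero fun h ↦ hl (exists_eq_ofReal_of_sineSolution_eq_zero hV₁ h),
      simpleResidue_of_ne_zero fun h ↦ hl (exists_eq_ofReal_of_sineSolution_eq_zero hV₂ h)]

end BoundaryData

section Transmission

variable {V V₁ V₂ : ℝ → ℝ} {t x a : ℝ} {f₁ f₂ P Q : ℂ → ℂ}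

theorem IsSchrodingerSolution.eq_cosineSolution_add_sineSolution_of_eqOn {l : ℂ} {y y' : ℝ → ℂ}
    (hy : IsSchrodingerSolution V₂ l y y') (hV₁ : ContinuousOn V₁ (Icc 0 1))
    (ht : t ∈ Icc (0 : ℝ) 1) (hx : x ∈ Icc (0 : ℝ) 1) (htx : t ≤ x) (hV : EqOn V₂ V₁ (Ioo t x)) :
    y x = y t * cosineSolution V₁ t l x + y' t * sineSolution V₁ t l x := by
  have hC := isEntireSolution_cosineSolution hV₁ ht
  have hS := isEntireSolution_sineSolution hV₁ ht
  have hyC := hy.wronskian_sub_wronskian_of_eqOn (hC.isSchrodingerSolution l) ht hx htx hV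
  have hyS := hy.wronskian_sub_wronskian_of_eqOn (hS.isSchrodingerSolution l) ht hx htx hV
  simp only [hC.initial, hC.initial_deriv, hS.initial, hS.initial_deriv, sub_self, zero_mul]
    at hyC hyS
  linear_combination cosineSolution V₁ t l x * hyS - sineSolution V₁ t l x * hyC
    - y x * wronskian_cosineSolution_sineSolution hV₁ ht hx l

/-- The transfer matrix from `t` to `x` has determinant one, so a pair `(P, Q)` of entire functions
annihilated by its first row is an entire multiple of `(-S, C)`. As `S` grows like the sine, a
slower growing `P` must vanish. -/
theorem eq_zero_of_mul_cosineSolution_add_mul_sineSolution_eq_zero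
    (hV : ContinuousOn V (Icc 0 1)) (ht : 0 ≤ t) (htx : t < x) (hx : x ≤ 1)
    (hP : Differentiable ℂ P) (hQ : Differentiable ℂ Q)
    (hPQ : ∀ l, P l * cosineSolution V t l x + Q l * sineSolution V t l x = 0)
    (hgrowth : HasExpUpperBound (x - t) 2 P) (l : ℂ) : P l = 0 ∧ Q l = 0 := by
  have htm : t ∈ Icc (0 : ℝ) 1 := ⟨ht, htx.le.trans hx⟩
  have hxm : x ∈ Icc (0 : ℝ) 1 := ⟨ht.trans htx.le, hx⟩
  set G : ℂ → ℂ := fun l ↦ P l * cosineSolutionDeriv V t l x + Q l * sineSolutionDeriv V t l x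
  have hG : Differentiable ℂ G :=
    (hP.fun_mul ((isEntireSolution_cosineSolution hV htm).differentiable_deriv x hxm)).fun_add
      (hQ.fun_mul ((isEntireSolution_sineSolution hV htm).differentiable_deriv x hxm))
  have hwronskian := wronskian_cosineSolution_sineSolution hV htm hxm
  have hGS (l : ℂ) : G l * sineSolution V t l x = -P l := by
    linear_combination sineSolutionDeriv V t l x * hPQ l - P l * hwronskian l
  have hGC (l : ℂ) : G l * cosineSolution V t l x = Q l := by
    linear_combination cosineSolutionDeriv V t l x * hPQ l + Q l * hwronskian l
  have hG_zero : G = 0 := eq_zero_of_growth_mul hG (tendsto_sineRadius (sub_pos.2 htx))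
    (hasExpLowerBound_sineSolution hV ht htx hx) (by simpa only [hGS] using hgrowth.neg) le_rfl
    one_le_two (.inr one_lt_two)
  rw [← hGC, ← neg_eq_zero, ← hGS, hG_zero]
  simp only [Pi.zero_apply, zero_mul, and_self]

theorem sineSolution_mul_sineSolutionDeriv_eq_of_eqOn (hV₁ : ContinuousOn V₁ (Icc 0 1))
    (hV₂ : ContinuousOn V₂ (Icc 0 1)) (ha : 0 ≤ a) (ha1 : a < 1) (hV : EqOn V₂ V₁ (Ioo a 1))
    (hf₁ : Differentiable ℂ f₁) (hf₂ : Differentiable ℂ f₂)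
    {e : ℝ} (hf₁_growth : HasExpUpperBound e 1 f₁) (hf₂_growth : HasExpUpperBound e 1 f₂)
    (hea : e + a ≤ 1 - a) (hne : ∃ l, f₁ l ≠ 0)
    (heq : ∀ l, f₁ l * sineSolution V₂ 0 l 1 = f₂ l * sineSolution V₁ 0 l 1) (l : ℂ) :
    sineSolution V₂ 0 l a * sineSolutionDeriv V₁ 0 l a
      = sineSolution V₁ 0 l a * sineSolutionDeriv V₂ 0 l a := by
  have h0 : (0 : ℝ) ∈ Icc 0 1 := unitInterval.zero_mem
  have ham : a ∈ Icc (0 : ℝ) 1 := ⟨ha, ha1.le⟩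
  have hS₁ := isEntireSolution_sineSolution hV₁ h0
  have hS₂ := isEntireSolution_sineSolution hV₂ h0
  have hS₁a := hS₁.differentiable a ham
  have hS₂a := hS₂.differentiable a ham
  have hS₁'a := hS₁.differentiable_deriv a ham
  have hS₂'a := hS₂.differentiable_deriv a ham
  have hgrowth : HasExpUpperBound (1 - a) 2
      fun l ↦ f₁ l * sineSolution V₂ 0 l a - f₂ l * sineSolution V₁ 0 l a := by
    refine HasExpUpperBound.mono (HasExpUpperBound.sub
      (hf₁_growth.mul (hasExpUpperBound_sineSolution hV₂ h0 ham))
      (hf₂_growth.mul (hasExpUpperBound_sineSolution hV₁ h0 ham))) ?_ le_rfl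
    rwa [sub_zero, abs_of_nonneg ha]
  have hPQ (l : ℂ) := eq_zero_of_mul_cosineSolution_add_mul_sineSolution_eq_zero hV₁ ha ha1 le_rfl
    ((hf₁.fun_mul hS₂a).fun_sub (hf₂.fun_mul hS₁a))
    ((hf₁.fun_mul hS₂'a).fun_sub (hf₂.fun_mul hS₁'a)) (fun l ↦ by
      have htransfer₁ := (hS₁.isSchrodingerSolution l).eq_cosineSolution_add_sineSolution hV₁ ham
        unitInterval.one_mem
      have htransfer₂ := (hS₂.isSchrodingerSolution l).eq_cosineSolution_add_sineSolution_of_eqOn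
        hV₁ ham unitInterval.one_mem ha1.le hV
      linear_combination heq l - f₁ l * htransfer₂ + f₂ l * htransfer₁.1) hgrowth l
  obtain ⟨l₀, hl₀⟩ := hne
  refine sub_eq_zero.1 (eq_zero_of_mul_eq_zero_of_differentiable hf₁
    ((hS₂a.fun_mul hS₁'a).fun_sub (hS₁a.fun_mul hS₂'a)) (fun l ↦ ?_) hl₀ l)
  linear_combination sineSolutionDeriv V₁ 0 l a * (hPQ l).1 - sineSolution V₁ 0 l a * (hPQ l).2

end Transmission

section BorgMarchenko

variable {V₁ V₂ : ℝ → ℝ} {a x : ℝ}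

theorem cosineSolution_mul_sineSolution_eq (hV₁ : ContinuousOn V₁ (Icc 0 1))
    (hV₂ : ContinuousOn V₂ (Icc 0 1)) (ha : 0 < a) (ha1 : a ≤ 1)
    (heq : ∀ l, sineSolution V₂ 0 l a * sineSolutionDeriv V₁ 0 l a
      = sineSolution V₁ 0 l a * sineSolutionDeriv V₂ 0 l a) (hx : x ∈ Icc 0 a) (l : ℂ) :
    cosineSolution V₁ a l x * sineSolution V₂ a l x
      = cosineSolution V₂ a l x * sineSolution V₁ a l x := by
  have h0 : (0 : ℝ) ∈ Icc 0 1 := unitInterval.zero_mem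
  have ham : a ∈ Icc (0 : ℝ) 1 := ⟨ha.le, ha1⟩
  have hxm : x ∈ Icc (0 : ℝ) 1 := ⟨hx.1, hx.2.trans ha1⟩
  set Δ : ℂ → ℂ := fun l ↦ cosineSolution V₁ a l x * sineSolution V₂ a l x
    - cosineSolution V₂ a l x * sineSolution V₁ a l x
  have hΔ : Differentiable ℂ Δ :=
    (((isEntireSolution_cosineSolution hV₁ ham).differentiable x hxm).fun_mul
      (differentiable_sineSolution hV₂ ham hxm)).fun_sub
    (((isEntireSolution_cosineSolution hV₂ ham).differentiable x hxm).fun_mul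
      (differentiable_sineSolution hV₁ ham hxm))
  have hΔmul (l : ℂ) : Δ l * (sineSolution V₁ 0 l a * sineSolution V₂ 0 l a)
      = sineSolution V₂ 0 l a * (sineSolution V₁ 0 l x * sineSolution V₂ a l x)
        - sineSolution V₁ 0 l a * (sineSolution V₂ 0 l x * sineSolution V₁ a l x) := by
    have hS₁ := (isSchrodingerSolution_sineSolution hV₁ h0 l).eq_cosineSolution_add_sineSolution
      hV₁ ham hxm
    have hS₂ := (isSchrodingerSolution_sineSolution hV₂ h0 l).eq_cosineSolution_add_sineSolution
      hV₂ ham hxm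
    rw [hS₁.1, hS₂.1]
    linear_combination -(sineSolution V₁ a l x * sineSolution V₂ a l x) * heq l
  have hupper := HasExpUpperBound.sub
    ((hasExpUpperBound_sineSolution hV₂ h0 ham).mul
      ((hasExpUpperBound_sineSolution hV₁ h0 hxm).mul (hasExpUpperBound_sineSolution hV₂ ham hxm)))
    ((hasExpUpperBound_sineSolution hV₁ h0 ham).mul
      ((hasExpUpperBound_sineSolution hV₂ h0 hxm).mul (hasExpUpperBound_sineSolution hV₁ ham hxm)))
  have hlower := (hasExpLowerBound_sineSolution hV₁ le_rfl ha ha1).mul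
    (hasExpLowerBound_sineSolution hV₂ le_rfl ha ha1)
  have hrate : |a - 0| + (|x - 0| + |x - a|) ≤ (a - 0) + (a - 0) := by
    rw [sub_zero, sub_zero, abs_of_nonneg ha.le, abs_of_nonneg hx.1,
      abs_of_nonpos (sub_nonpos.2 hx.2)]
    linarith
  have hΔ_zero : Δ = 0 := eq_zero_of_growth_mul hΔ (tendsto_sineRadius (sub_pos.2 ha)) hlower
    (by simpa only [hΔmul] using hupper) hrate (by norm_num) (.inr (by norm_num))
  exact sub_eq_zero.1 (congrFun hΔ_zero l)

theorem IsSchrodingerSolution.potential_eq_of_sq_eq {l : ℂ} {y y' v v' : ℝ → ℂ}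
    (hy : IsSchrodingerSolution V₁ l y y') (hv : IsSchrodingerSolution V₂ l v v') (ha1 : a ≤ 1)
    (hsq : ∀ x ∈ Ioo 0 a, y x ^ 2 = v x ^ 2) (hx : x ∈ Ioo 0 a) (hne : y x ≠ 0) :
    V₁ x = V₂ x := by
  have hmem {x : ℝ} (hx : x ∈ Ioo 0 a) : x ∈ Ioo (0 : ℝ) 1 := ⟨hx.1, hx.2.trans_le ha1⟩
  have hmul (x : ℝ) (hx : x ∈ Ioo 0 a) : y x * y' x - v x * v' x = 0 := by
    have hderiv := eq_zero_of_hasDerivAt_of_eq_zero_on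
      (((hy.hasDerivAt (hmem hx)).pow 2).sub ((hv.hasDerivAt (hmem hx)).pow 2)) isOpen_Ioo hx
      fun s hs ↦ sub_eq_zero.2 (hsq s hs)
    push_cast at hderiv
    linear_combination hderiv / 2
  have hderiv := eq_zero_of_hasDerivAt_of_eq_zero_on
    (((hy.hasDerivAt (hmem hx)).mul (hy.hasDerivAt_deriv (hmem hx))).sub
      ((hv.hasDerivAt (hmem hx)).mul (hv.hasDerivAt_deriv (hmem hx)))) isOpen_Ioo hx hmul
  have hsq_deriv : y' x ^ 2 - v' x ^ 2 = 0 := by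
    refine (mul_eq_zero.1 ?_).resolve_left (pow_ne_zero 2 hne)
    linear_combination (y x * y' x + v x * v' x) * hmul x hx - v' x ^ 2 * hsq x hx
  have hV : (V₁ x : ℂ) - V₂ x = 0 := by
    refine (mul_eq_zero.1 ?_).resolve_left (pow_ne_zero 2 hne)
    linear_combination hderiv - hsq_deriv - ((V₂ x : ℂ) - l) * hsq x hx
  exact_mod_cast sub_eq_zero.1 hV

theorem sq_eq_sq_of_cosineSolution_mul_sineSolution_eq (hV₁ : ContinuousOn V₁ (Icc 0 1))
    (hV₂ : ContinuousOn V₂ (Icc 0 1)) (ha : 0 ≤ a) (ha1 : a ≤ 1) {l : ℂ}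
    (heq : ∀ x ∈ Ioo 0 a, cosineSolution V₁ a l x * sineSolution V₂ a l x
      = cosineSolution V₂ a l x * sineSolution V₁ a l x) (hx : x ∈ Ioo 0 a) :
    cosineSolution V₁ a l x ^ 2 = cosineSolution V₂ a l x ^ 2 ∧
      sineSolution V₁ a l x ^ 2 = sineSolution V₂ a l x ^ 2 := by
  have ham : a ∈ Icc (0 : ℝ) 1 := ⟨ha, ha1⟩
  have hxm : x ∈ Ioo (0 : ℝ) 1 := ⟨hx.1, hx.2.trans_le ha1⟩
  have hC₁ := ((isEntireSolution_cosineSolution hV₁ ham).isSchrodingerSolution l).hasDerivAt hxm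
  have hC₂ := ((isEntireSolution_cosineSolution hV₂ ham).isSchrodingerSolution l).hasDerivAt hxm
  have hS₁ := (isSchrodingerSolution_sineSolution hV₁ ham l).hasDerivAt hxm
  have hS₂ := (isSchrodingerSolution_sineSolution hV₂ ham l).hasDerivAt hxm
  have hderiv := eq_zero_of_hasDerivAt_of_eq_zero_on ((hC₁.mul hS₂).sub (hC₂.mul hS₁)) isOpen_Ioo hx
    fun s hs ↦ sub_eq_zero.2 (heq s hs)
  have hwronskian₁ := wronskian_cosineSolution_sineSolution hV₁ ham (Ioo_subset_Icc_self hxm) l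
  have hwronskian₂ := wronskian_cosineSolution_sineSolution hV₂ ham (Ioo_subset_Icc_self hxm) l
  have hx_eq := heq x hx
  generalize cosineSolution V₁ a l x = C₁, cosineSolution V₂ a l x = C₂,
    sineSolution V₁ a l x = S₁, sineSolution V₂ a l x = S₂, cosineSolutionDeriv V₁ a l x = C₁',
    cosineSolutionDeriv V₂ a l x = C₂', sineSolutionDeriv V₁ a l x = S₁',
    sineSolutionDeriv V₂ a l x = S₂' at *
  constructor
  · linear_combination C₁ * C₂ * hderiv - C₁ ^ 2 * hwronskian₂ + C₂ ^ 2 * hwronskian₁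
      - (C₂ * C₁' + C₁ * C₂') * hx_eq
  · linear_combination S₁ * S₂ * hderiv - S₁ ^ 2 * hwronskian₂ + S₂ ^ 2 * hwronskian₁
      - (S₁ * S₂' + S₂ * S₁') * hx_eq

theorem eqOn_of_cosineSolution_mul_sineSolution_eq (hV₁ : ContinuousOn V₁ (Icc 0 1))
    (hV₂ : ContinuousOn V₂ (Icc 0 1)) (ha : 0 ≤ a) (ha1 : a ≤ 1) {l : ℂ}
    (heq : ∀ x ∈ Ioo 0 a, cosineSolution V₁ a l x * sineSolution V₂ a l x
      = cosineSolution V₂ a l x * sineSolution V₁ a l x) : EqOn V₁ V₂ (Ioo 0 a) := fun x hx ↦ by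
  have ham : a ∈ Icc (0 : ℝ) 1 := ⟨ha, ha1⟩
  have hxm : x ∈ Icc (0 : ℝ) 1 := ⟨hx.1.le, hx.2.le.trans ha1⟩
  have hsq {x : ℝ} (hx : x ∈ Ioo 0 a) :=
    sq_eq_sq_of_cosineSolution_mul_sineSolution_eq hV₁ hV₂ ha ha1 heq hx
  by_cases hC : cosineSolution V₁ a l x = 0
  · refine (isSchrodingerSolution_sineSolution hV₁ ham l).potential_eq_of_sq_eq
      (isSchrodingerSolution_sineSolution hV₂ ham l) ha1 (fun x hx ↦ (hsq hx).2) hx fun hS ↦ ?_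
    have hwronskian := wronskian_cosineSolution_sineSolution hV₁ ham hxm l
    rw [hC, hS, zero_mul, mul_zero, sub_zero] at hwronskian
    exact zero_ne_one hwronskian
  · exact ((isEntireSolution_cosineSolution hV₁ ham).isSchrodingerSolution l).potential_eq_of_sq_eq
      ((isEntireSolution_cosineSolution hV₂ ham).isSchrodingerSolution l) ha1
      (fun x hx ↦ (hsq hx).1) hx hC

end BorgMarchenko

section Gauge

variable {b b₁ b₂ g g₁ g₂ : ℝ → ℝ} {a : ℝ}

theorem continuousOn_potentialOf (hb : ContDiffOn ℝ 1 b (Icc 0 1)) :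
    ContinuousOn (potentialOf b) (Icc 0 1) :=
  ((hb.continuousOn_derivWithin uniqueDiffOn_Icc_zero_one le_rfl).fun_neg.div_const 2).fun_add
    ((hb.continuousOn.pow 2).div_const 4)

theorem continuousOn_gaugedDatum (hb : ContinuousOn b (Icc 0 1)) (hg : ContinuousOn g (Icc 0 1)) :
    ContinuousOn (gaugedDatum b g) (Icc 0 1) := by
  have hint := intervalIntegrable_of_mem_Icc hb unitInterval.zero_mem unitInterval.one_mem
  have hprimitive := intervalIntegral.continuousOn_primitive_interval' hint (a := 1) right_mem_uIcc
  rw [uIcc_of_le zero_le_one] at hprimitive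
  exact (Real.continuous_exp.comp_continuousOn (continuousOn_const.mul hprimitive)).mul hg

theorem eqOn_of_gaugedDatum_eqOn (hb : EqOn b₁ b₂ (Icc 0 1))
    (hg : EqOn (gaugedDatum b₁ g₁) (gaugedDatum b₂ g₂) (Icc 0 1)) : EqOn g₁ g₂ (Icc 0 1) := by
  intro x hx
  have hint : ∫ s in (1 : ℝ)..x, b₁ s = ∫ s in (1 : ℝ)..x, b₂ s :=
    intervalIntegral.integral_congr fun s hs ↦
      hb (ordConnected_Icc.uIcc_subset unitInterval.one_mem hx hs)
  refine mul_left_cancel₀ (Real.exp_pos _).ne' ((hg hx).trans ?_)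
  rw [gaugedDatum, hint]

theorem potentialOf_eqOn_Ioo (ha : 0 ≤ a)
    (hb : ∀ x ∈ Icc (0 : ℝ) 1, a < x → b₁ x = b₂ x) :
    EqOn (potentialOf b₁) (potentialOf b₂) (Ioo a 1) := by
  intro x hx
  have hxm : x ∈ Icc (0 : ℝ) 1 := ⟨ha.trans hx.1.le, hx.2.le⟩
  have hderiv : derivWithin b₁ (Icc 0 1) x = derivWithin b₂ (Icc 0 1) x := by
    refine EventuallyEq.derivWithin_eq ?_ (hb x hxm hx.1)
    filter_upwards [self_mem_nhdsWithin, mem_nhdsWithin_of_mem_nhds (lt_mem_nhds hx.1)]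
      with s hs has using hb s hs has
  rw [potentialOf, potentialOf, hderiv, hb x hxm hx.1]

/-- `b ↦ -b'/2 + b²/4` is a first order operator: the difference of two solutions of the Riccati
equation satisfies a linear homogeneous equation, hence is determined by its value at `1`. -/
theorem eqOn_of_potentialOf_eqOn (hb₁ : ContDiffOn ℝ 1 b₁ (Icc 0 1))
    (hb₂ : ContDiffOn ℝ 1 b₂ (Icc 0 1)) (hV : EqOn (potentialOf b₁) (potentialOf b₂) (Icc 0 1))
    (h1 : b₁ 1 = b₂ 1) : EqOn b₁ b₂ (Icc 0 1) := by
  obtain ⟨K, hK⟩ := isCompact_Icc.exists_bound_of_continuousOn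
    ((hb₁.continuousOn.fun_add hb₂.continuousOn).div_const 2)
  have hderiv {b : ℝ → ℝ} (hb : ContDiffOn ℝ 1 b (Icc 0 1)) {x : ℝ} (hx : x ∈ Ioc (0 : ℝ) 1) :
      HasDerivWithinAt b (derivWithin b (Icc 0 1) x) (Iic x) x :=
    ((hb.differentiableOn one_ne_zero) x (Ioc_subset_Icc_self hx)).hasDerivWithinAt
      |>.mono_of_mem_nhdsWithin (mem_of_superset (Icc_mem_nhdsLE hx.1) (Icc_subset_Icc_right hx.2))
  have hunique : EqOn (fun x ↦ b₁ x - b₂ x) 0 (Icc 0 1) :=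
    ODE_solution_unique_of_mem_Icc_left (v := fun x u ↦ (b₁ x + b₂ x) / 2 * u)
      (s := fun _ ↦ univ) (K := K.toNNReal)
      (fun x hx ↦ LipschitzOnWith.of_dist_le_mul fun u _ v _ ↦ ?_)
      (hb₁.continuousOn.fun_sub hb₂.continuousOn) (fun x hx ↦ ?_) (fun _ _ ↦ mem_univ _)
      continuousOn_const (fun x _ ↦ ?_) (fun _ _ ↦ mem_univ _) (sub_eq_zero.2 h1)
  · exact fun x hx ↦ sub_eq_zero.1 (hunique hx)
  · rw [dist_eq_norm, dist_eq_norm, ← mul_sub, norm_mul]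
    gcongr
    exact (hK x (Ioc_subset_Icc_self hx)).trans (Real.le_coe_toNNReal K)
  · refine ((hderiv hb₁ hx).sub (hderiv hb₂ hx)).congr_deriv ?_
    have hVx := hV (Ioc_subset_Icc_self hx)
    simp only [potentialOf] at hVx
    linear_combination -2 * hVx
  · simpa only [Pi.zero_apply, mul_zero] using! hasDerivWithinAt_const x (Iic x) (0 : ℝ)

end Gauge

section Uniqueness

variable {V₁ V₂ h₁ h₂ : ℝ → ℝ} {ε a : ℝ}

theorem sineSolution_congr (hV₁ : ContinuousOn V₁ (Icc 0 1)) (hV₂ : ContinuousOn V₂ (Icc 0 1))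
    (hV : EqOn V₁ V₂ (Icc 0 1)) (l : ℂ) {x : ℝ} (hx : x ∈ Icc (0 : ℝ) 1) :
    sineSolution V₁ 0 l x = sineSolution V₂ 0 l x := by
  have h0 : (0 : ℝ) ∈ Icc 0 1 := unitInterval.zero_mem
  have hsol := isSchrodingerSolution_sineSolution hV₁ h0 l
  have hS := hsol.eq_cosineSolution_add_sineSolution_of_eqOn hV₂ h0 hx hx.1
    (hV.mono (Ioo_subset_Icc_self.trans (Icc_subset_Icc_right hx.2)))
  rwa [sineSolution_self hV₁ h0, sineSolutionDeriv_self hV₁ h0, zero_mul, zero_add, one_mul] at hS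

theorem eqOn_potential_of_sineTransform_mul_eq (hV₁ : ContinuousOn V₁ (Icc 0 1))
    (hV₂ : ContinuousOn V₂ (Icc 0 1)) (hh₁ : ContinuousOn h₁ (Icc 0 1))
    (hh₂ : ContinuousOn h₂ (Icc 0 1)) (ha : 0 < a) (ha1 : a < 1) (hεa : ε + 2 * a ≤ 1)
    (hsupp₁ : ∀ x ∈ Icc (0 : ℝ) 1, ε < x → h₁ x = 0)
    (hsupp₂ : ∀ x ∈ Icc (0 : ℝ) 1, ε < x → h₂ x = 0)
    (hne : ∃ x ∈ Icc (0 : ℝ) 1, h₁ x ≠ 0) (hV : EqOn V₁ V₂ (Ioo a 1))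
    (heq : ∀ l, sineTransform V₁ h₁ l * sineSolution V₂ 0 l 1
      = sineTransform V₂ h₂ l * sineSolution V₁ 0 l 1) : EqOn V₁ V₂ (Icc 0 1) := by
  have hinterior := sineSolution_mul_sineSolutionDeriv_eq_of_eqOn hV₁ hV₂ ha.le ha1 hV.symm
    (differentiable_sineTransform hV₁ hh₁) (differentiable_sineTransform hV₂ hh₂)
    (hasExpUpperBound_sineTransform hV₁ hh₁ hsupp₁) (hasExpUpperBound_sineTransform hV₂ hh₂ hsupp₂)
    (by linarith) (exists_sineTransform_ne_zero hV₁ hh₁ hne) heq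
  have hleft : EqOn V₁ V₂ (Ioo 0 a) :=
    eqOn_of_cosineSolution_mul_sineSolution_eq hV₁ hV₂ ha.le ha1.le (l := 0) fun x hx ↦
      cosineSolution_mul_sineSolution_eq hV₁ hV₂ ha ha1.le hinterior (Ioo_subset_Icc_self hx) 0
  refine (hleft.union hV).of_subset_closure hV₁ hV₂
    (union_subset (Ioo_subset_Icc_self.trans (Icc_subset_Icc_right ha1.le))
      (Ioo_subset_Icc_self.trans (Icc_subset_Icc_left ha.le))) ?_
  rw [closure_union, closure_Ioo ha.ne, closure_Ioo ha1.ne, Icc_union_Icc_eq_Icc ha.le ha1.le]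

theorem eqOn_datum_of_sineTransform_mul_eq (hV₁ : ContinuousOn V₁ (Icc 0 1))
    (hV₂ : ContinuousOn V₂ (Icc 0 1)) (hh₁ : ContinuousOn h₁ (Icc 0 1))
    (hh₂ : ContinuousOn h₂ (Icc 0 1)) (hV : EqOn V₁ V₂ (Icc 0 1))
    (heq : ∀ l, sineTransform V₁ h₁ l * sineSolution V₂ 0 l 1
      = sineTransform V₂ h₂ l * sineSolution V₁ 0 l 1) : EqOn h₁ h₂ (Icc 0 1) := by
  have hS (l : ℂ) {x : ℝ} (hx : x ∈ Icc (0 : ℝ) 1) := sineSolution_congr hV₁ hV₂ hV l hx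
  have htransform (l : ℂ) : sineTransform V₂ h₂ l = sineTransform V₁ h₂ l :=
    intervalIntegral.integral_congr fun x hx ↦ by
      rw [uIcc_of_le zero_le_one] at hx
      simp only [hS l hx]
  have hS_ne : sineSolution V₁ 0 Complex.I 1 ≠ 0 := fun hzero ↦ by
    obtain ⟨μ, hμ⟩ := exists_eq_ofReal_of_sineSolution_eq_zero hV₁ hzero
    simpa using congrArg Complex.im hμ
  refine eq_of_sineTransform_eq hV₁ hh₁ hh₂ fun l ↦ sub_eq_zero.1 ?_
  refine eq_zero_of_mul_eq_zero_of_differentiable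
    (differentiable_sineSolution hV₁ unitInterval.zero_mem unitInterval.one_mem)
    ((differentiable_sineTransform hV₁ hh₁).fun_sub (differentiable_sineTransform hV₁ hh₂))
    (fun l ↦ ?_) hS_ne l
  have := heq l
  rw [htransform, ← hS l unitInterval.one_mem] at this
  linear_combination this

end Uniqueness

theorem statement1_general {ε a T : ℝ} (hε : 0 < ε) (ha : 0 < a) (hεa : ε + 2 * a ≤ 1)
    (hT : 0 < T) {b₁ b₂ g₁ g₂ : ℝ → ℝ}
    (hb₁ : ContDiffOn ℝ 1 b₁ (Icc 0 1)) (hb₂ : ContDiffOn ℝ 1 b₂ (Icc 0 1))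
    (hg₁ : ContinuousOn g₁ (Icc 0 1)) (hg₂ : ContinuousOn g₂ (Icc 0 1))
    (hg₁ne : ∃ x ∈ Icc (0 : ℝ) 1, g₁ x ≠ 0)
    (hg₁supp : ∀ x ∈ Icc (0 : ℝ) 1, ε < x → g₁ x = 0)
    (hg₂supp : ∀ x ∈ Icc (0 : ℝ) 1, ε < x → g₂ x = 0)
    (hb : ∀ x ∈ Icc (0 : ℝ) 1, a < x → b₁ x = b₂ x)
    {lam₁ lam₂ : ℕ → ℝ} {phi₁ phi₂ : ℕ → ℝ → ℝ}
    (hsys₁ : IsDirichletSystem (potentialOf b₁) lam₁ phi₁)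
    (hsys₂ : IsDirichletSystem (potentialOf b₂) lam₂ phi₂)
    (hmeas : ∃ᶠ t in 𝓝[≠] T,
      boundaryMeasurement b₁ g₁ lam₁ phi₁ t = boundaryMeasurement b₂ g₂ lam₂ phi₂ t) :
    EqOn g₁ g₂ (Icc 0 1) ∧ EqOn b₁ b₂ (Icc 0 1) := by
  have hV₁ := continuousOn_potentialOf hb₁
  have hV₂ := continuousOn_potentialOf hb₂
  have hh₁ := continuousOn_gaugedDatum hb₁.continuousOn hg₁
  have hh₂ := continuousOn_gaugedDatum hb₂.continuousOn hg₂
  have hsupp₁ (x : ℝ) (hx : x ∈ Icc (0 : ℝ) 1) (hεx : ε < x) : gaugedDatum b₁ g₁ x = 0 :=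
    mul_eq_zero_of_right _ (hg₁supp x hx hεx)
  have hsupp₂ (x : ℝ) (hx : x ∈ Icc (0 : ℝ) 1) (hεx : ε < x) : gaugedDatum b₂ g₂ x = 0 :=
    mul_eq_zero_of_right _ (hg₂supp x hx hεx)
  have hne : ∃ x ∈ Icc (0 : ℝ) 1, gaugedDatum b₁ g₁ x ≠ 0 :=
    hg₁ne.imp fun x hx ↦ ⟨hx.1, mul_ne_zero (Real.exp_ne_zero _) hx.2⟩
  simp only [boundaryMeasurement_eq_tsum] at hmeas
  have htransform := sineTransform_mul_sineSolution_eq hV₁ hV₂ hh₁ hh₂ (by linarith) hsupp₁ hsupp₂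
    (simpleResidue_sineTransform_eq_of_frequently_eq hV₁ hV₂ hh₁ hh₂ hsys₁ hsys₂ hT hmeas)
  have hV := eqOn_potential_of_sineTransform_mul_eq hV₁ hV₂ hh₁ hh₂ ha (by linarith) hεa
    hsupp₁ hsupp₂ hne (potentialOf_eqOn_Ioo ha.le hb) htransform
  have hb_eq := eqOn_of_potentialOf_eqOn hb₁ hb₂ hV (hb 1 unitInterval.one_mem (by linarith))
  exact ⟨eqOn_of_gaugedDatum_eqOn hb_eq
    (eqOn_datum_of_sineTransform_mul_eq hV₁ hV₂ hh₁ hh₂ hV htransform), hb_eq⟩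

/-- simultaneous determination of the convection coefficient and the initial
data of a 1D convection–diffusion process from the lateral boundary measurements at a
convergent sequence of times. -/
theorem statement1
    (T ε T1 : ℝ) (hT : 0 < T) (hε : ε ∈ Ioo (0:ℝ) (1/2)) (hT1 : T1 ∈ Ioo 0 T)
    (t : ℕ → ℝ) (ht_inj : Function.Injective t) (ht_mem : ∀ m, t m ∈ Ioo 0 T)
    (ht_lim : Filter.Tendsto t Filter.atTop (nhds T1))
    (b₁ b₂ g₁ g₂ : ℝ → ℝ)
    (hb₁ : ContDiffOn ℝ 1 b₁ (Icc 0 1)) (hb₂ : ContDiffOn ℝ 1 b₂ (Icc 0 1))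
    (hg₁ : ContDiffOn ℝ 1 g₁ (Icc 0 1)) (hg₂ : ContDiffOn ℝ 1 g₂ (Icc 0 1))
    (hg₁bd : g₁ 0 = 0 ∧ g₁ 1 = 0) (hg₂bd : g₂ 0 = 0 ∧ g₂ 1 = 0)
    (hg₁ne : ∃ x ∈ Icc (0:ℝ) 1, g₁ x ≠ 0) (hg₂ne : ∃ x ∈ Icc (0:ℝ) 1, g₂ x ≠ 0)
    (hgsupp : ∀ x ∈ Icc (0:ℝ) 1, x ∉ Icc (0:ℝ) ε → g₁ x = 0 ∧ g₂ x = 0)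
    (hbsupp : ∀ x ∈ Icc (0:ℝ) 1, x ∉ Icc (0:ℝ) (1/2 - ε) → b₁ x = b₂ x)
    (lam₁ lam₂ : ℕ → ℝ) (phi₁ phi₂ : ℕ → ℝ → ℝ)
    (hsys₁ : IsDirichletSystem (potentialOf b₁) lam₁ phi₁)
    (hsys₂ : IsDirichletSystem (potentialOf b₂) lam₂ phi₂)
    (hmeas : ∀ m : ℕ,
      boundaryMeasurement b₁ g₁ lam₁ phi₁ (t m)
        = boundaryMeasurement b₂ g₂ lam₂ phi₂ (t m)) :
    EqOn g₁ g₂ (Icc 0 1) ∧ EqOn b₁ b₂ (Icc 0 1) := by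
  have hlim : Tendsto t atTop (𝓝[≠] T1) := tendsto_nhdsWithin_iff.2
    ⟨ht_lim, Nat.cofinite_eq_atTop ▸
      ht_inj.tendsto_cofinite (finite_singleton T1).compl_mem_cofinite⟩
  refine statement1_general hε.1 (a := 1 / 2 - ε) (sub_pos.2 hε.2) (by linarith [hε.1]) hT1.1
    hb₁ hb₂ hg₁.continuousOn hg₂.continuousOn hg₁ne (fun x hx hεx ↦ (hgsupp x hx ?_).1)
    (fun x hx hεx ↦ (hgsupp x hx ?_).2) (fun x hx hax ↦ hbsupp x hx ?_) hsys₁ hsys₂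
    (hlim.frequently (Frequently.of_forall hmeas))
  all_goals exact fun hmem ↦ hmem.2.not_gt ‹_›
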